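/- Recovery sequence with prescribed affine boundary values (Step 1 of the proof of Proposition 3.11 of the paper): assume Assumption H and Assumption A:2T. For every F ∈ ℝ^{n×d} there exists a set Ω' ∈ ℱ with ℙ(Ω') = 1 such that for every ω ∈ Ω', every affine map g : ℝ^d → ℝⁿ with Jacobian F, and every half-open axis-parallel box A ⊂ ℝ^d, there exists a family (u_ε)_{ε>0} of functions u_ε : εℤ^d → ℝⁿ satisfying: (i) u_ε(z) = g(z) for every z ∈ εℤ^d with dist(z, ℝ^d∖A) ≤ εR; (ii) lim_{ε↓0} ε^d Σ_{z∈εℤ^d∩A} |u_ε(z) − g(z)|^{pβ/(β+1)} = 0; (iii) lim_{ε↓0} E_ε(ω;u_ε,A) = |A| · W₀(F). -/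

import Mathlib

open MeasureTheory Filter Metric Set
open scoped Classical
open scoped ENNReal Topology Pointwise

noncomputable section

namespace StochHom

/-- `ℝ^d` with the Euclidean norm. -/
abbrev Rd (d : ℕ) : Type := EuclideanSpace ℝ (Fin d)

/-- `ℝ^n` with the Euclidean norm. -/
abbrev Rn (n : ℕ) : Type := EuclideanSpace ℝ (Fin n)

/-- The lattice `ℤ^d`. -/
abbrev Zd (d : ℕ) : Type := Fin d → ℤ

variable {d n : ℕ}

/-- The embedding of the lattice `ℤ^d` into `ℝ^d`. -/
def toRd (z : Zd d) : Rd d := (EuclideanSpace.equiv (Fin d) ℝ).symm fun i => (z i : ℝ)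

/-- The standard basis vectors `eᵢ` of `ℤ^d`. -/
def stdb (i : Fin d) : Zd d := fun j => if j = i then 1 else 0

/-- The interaction range `R = max {4√d, max_{b ∈ ℰ₀} |b|}`. -/
def irange (d : ℕ) (E0 : Finset (Zd d)) : ℝ :=
  max (4 * Real.sqrt d) (sSup ((fun b : Zd d => ‖toRd b‖) '' (E0 : Set (Zd d))))

variable {Ω : Type*} [MeasurableSpace Ω]

/-- The energy `E₁(ω; u, ℤ^d ∩ A)`. -/
def energy1 (τ : Zd d → Ω → Ω) (E0 : Finset (Zd d)) (V : Zd d → Ω → Rn n → ℝ)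
    (ω : Ω) (u : Zd d → Rn n) (A : Set (Rd d)) : ℝ :=
  ∑' z : Zd d, if toRd z ∈ A then
      ∑ b ∈ E0, V b (τ z ω) ((‖toRd b‖)⁻¹ • (u (z + b) - u z)) else 0

/-- The scaled energy `E_ε(ω; u, A)`, where a function `u : εℤ^d → ℝ^n` is identified with a
function on `ℤ^d` via `z ↦ u(εz)`, so that `∂_b^ε u (z) = (u (z+b) - u z)/(ε |b|)`. -/
def energyE (τ : Zd d → Ω → Ω) (E0 : Finset (Zd d)) (V : Zd d → Ω → Rn n → ℝ)
    (ε : ℝ) (ω : Ω) (u : Zd d → Rn n) (A : Set (Rd d)) : ℝ :=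
  ε ^ d * ∑' z : Zd d, if ε • toRd z ∈ A then
      ∑ b ∈ E0, V b (τ z ω) ((ε * ‖toRd b‖)⁻¹ • (u (z + b) - u z)) else 0

/-- The localized minimal energy `m_F(ω; A)`. -/
def mF (τ : Zd d → Ω → Ω) (E0 : Finset (Zd d)) (V : Zd d → Ω → Rn n → ℝ)
    (ω : Ω) (F : Rd d →L[ℝ] Rn n) (A : Set (Rd d)) : ℝ :=
  ⨅ φ : {φ : Zd d → Rn n // ∀ z : Zd d, infDist (toRd z) Aᶜ ≤ irange d E0 → φ z = 0},
    energy1 τ E0 V ω (fun z => F (toRd z) + φ.1 z) A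

/-- The half-open cube `[0,k)^d ⊂ ℝ^d`. -/
def cube (d k : ℕ) : Set (Rd d) := {x | ∀ i, 0 ≤ x i ∧ x i < (k : ℝ)}

/-- The homogenized energy density `W₀(F) = inf_{k ≥ 1} k⁻ᵈ E[m_F(·, [0,k)^d)]`. -/
def W0 (P : Measure Ω) (τ : Zd d → Ω → Ω) (E0 : Finset (Zd d))
    (V : Zd d → Ω → Rn n → ℝ) (F : Rd d →L[ℝ] Rn n) : ℝ :=
  ⨅ k : {k : ℕ // 0 < k}, (((k : ℕ) : ℝ) ^ d)⁻¹ * ∫ ω, mF τ E0 V ω F (cube d k) ∂P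

/-- Half-open axis-parallel box `Π_i [aᵢ, bᵢ)`. -/
def halfBox (a b : Fin d → ℝ) : Set (Rd d) := {x | ∀ i, a i ≤ x i ∧ x i < b i}

/-- Open axis-parallel box `Π_i (aᵢ, bᵢ)`. -/
def openBox (a b : Fin d → ℝ) : Set (Rd d) := {x | ∀ i, a i < x i ∧ x i < b i}

/-- Closed axis-parallel box `Π_i [aᵢ, bᵢ]`. -/
def closedBox (a b : Fin d → ℝ) : Set (Rd d) := {x | ∀ i, a i ≤ x i ∧ x i ≤ b i}

/-- Half-open axis-parallel box with integer corners. -/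
def intBox (a b : Zd d) : Set (Rd d) := {x | ∀ i, (a i : ℝ) ≤ x i ∧ x i < (b i : ℝ)}

/-- The periodic cell minimization `W^{(k)}(ω; F)`. -/
def Wper (τ : Zd d → Ω → Ω) (E0 : Finset (Zd d)) (V : Zd d → Ω → Rn n → ℝ)
    (k : ℕ) (ω : Ω) (F : Rd d →L[ℝ] Rn n) : ℝ :=
  ⨅ φ : {φ : Zd d → Rn n // ∀ z z' : Zd d, φ (z + k • z') = φ z},
    ((k : ℝ) ^ d)⁻¹ * energy1 τ E0 V ω (fun z => F (toRd z) + φ.1 z) (cube d k)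

/-!
Fix `δ > 0`. On a cell of large side `k`, already finitely many correctors suffice to come within
`δ` of the density `W₀(F)` in mean, because the infimum over all correctors is a monotone limit of
minima over finite sets. Tile the rescaled box by such cells and put in each tile the best of these
correctors. Averaging over the `k ^ d` offsets of the tiling and applying the pointwise ergodic
theorem along boxes gives, for small `ε`, a field of energy at most `|A| W₀(F) + δ`. The affine
field has limiting energy at least `|A| W₀(F)`, so by continuity along the segment joining it to
the glued field some multiple of the glued corrector has energy within `δ` of `|A| W₀(F)`. The
correctors are bounded uniformly in `ε`, hence after rescaling by `ε` their moments vanish, and a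
diagonal choice of `δ` yields the limit.

The ergodic theorem holds for coboundaries of bounded functions and for constants, which together
span a dense subspace of `L²`; a maximal inequality, proved by Vitali covering, extends it to `L¹`.
-/

/-! ### Lattice boxes -/

/-- The lattice points of the half-open box `∏ᵢ [Lᵢ, Mᵢ)`. -/
def latticeBox (L M : Zd d) : Finset (Zd d) := Fintype.piFinset fun i => Finset.Ico (L i) (M i)

theorem mem_latticeBox {L M z : Zd d} : z ∈ latticeBox L M ↔ ∀ i, L i ≤ z i ∧ z i < M i := by
  simp only [latticeBox, Fintype.mem_piFinset, Finset.mem_Ico]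

theorem card_latticeBox (L M : Zd d) :
    ((latticeBox L M).card : ℝ) = ∏ i, max ((M i : ℝ) - L i) 0 := by
  simp_rw [latticeBox, Fintype.card_piFinset, Int.card_Ico, Nat.cast_prod]
  refine Finset.prod_congr rfl fun i _ => ?_
  exact_mod_cast Int.toNat_eq_max (M i - L i)

theorem add_mem_latticeBox_iff {L M z w : Zd d} :
    z + w ∈ latticeBox (L + w) (M + w) ↔ z ∈ latticeBox L M := by
  simp only [mem_latticeBox, Pi.add_apply, add_le_add_iff_right, add_lt_add_iff_right]

theorem sum_latticeBox_add {E : Type*} [AddCommMonoid E] (L M w : Zd d) (f : Zd d → E) :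
    ∑ z ∈ latticeBox L M, f (z + w) = ∑ z ∈ latticeBox (L + w) (M + w), f z :=
  Finset.sum_equiv (Equiv.addRight w) (fun _ => add_mem_latticeBox_iff.symm) fun _ _ => rfl

theorem latticeBox_inter (L M L' M' : Zd d) :
    latticeBox L M ∩ latticeBox L' M' = latticeBox (L ⊔ L') (M ⊓ M') := by
  ext z
  simp only [Finset.mem_inter, mem_latticeBox, Pi.sup_apply, Pi.inf_apply, sup_le_iff, lt_inf_iff,
    ← forall_and]
  exact forall_congr' fun i => by tauto

theorem volume_real_halfBox (a b : Fin d → ℝ) :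
    volume.real (halfBox a b) = ∏ i, max (b i - a i) 0 := by
  have h_pi : halfBox a b =
      (MeasurableEquiv.toLp 2 (Fin d → ℝ)).symm ⁻¹' univ.pi fun i => Ico (a i) (b i) := by
    ext x
    simp [halfBox]
  rw [h_pi, measureReal_def, (EuclideanSpace.volume_preserving_symm_measurableEquiv_toLp
    (Fin d)).measure_preimage_equiv, Real.volume_pi_Ico, ENNReal.toReal_prod]
  exact Finset.prod_congr rfl fun i _ => ENNReal.toReal_ofReal'

/-- The corner `L ε` of a lattice box, rescaled by `ε`, converges to `a` as `ε ↓ 0`. -/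
def RescaledTendsto (L : ℝ → Zd d) (a : Fin d → ℝ) : Prop :=
  ∀ i, Tendsto (fun ε : ℝ => ε * (L ε i : ℝ)) (𝓝[>] 0) (𝓝 (a i))

namespace RescaledTendsto

variable {L L' M : ℝ → Zd d} {a b : Fin d → ℝ}

theorem add_const (h : RescaledTendsto L a) (w : Zd d) :
    RescaledTendsto (fun ε => L ε + w) a := by
  intro i
  have h_const : Tendsto (fun ε : ℝ => ε * (w i : ℝ)) (𝓝[>] 0) (𝓝 (0 * (w i : ℝ))) :=
    (tendsto_nhdsWithin_of_tendsto_nhds tendsto_id).mul_const _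
  simpa only [Pi.add_apply, Int.cast_add, mul_add, zero_mul, add_zero] using (h i).add h_const

theorem sup (h : RescaledTendsto L a) (h' : RescaledTendsto L' a) :
    RescaledTendsto (fun ε => L ε ⊔ L' ε) a := by
  intro i
  have h_max := (h i).max (h' i)
  rw [max_self] at h_max
  refine h_max.congr' ?_
  filter_upwards [self_mem_nhdsWithin] with ε hε
  simp only [Pi.sup_apply, Int.cast_max, mul_max_of_nonneg _ _ (mem_Ioi.1 hε).le]

theorem inf (h : RescaledTendsto L a) (h' : RescaledTendsto L' a) :
    RescaledTendsto (fun ε => L ε ⊓ L' ε) a := by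
  intro i
  have h_min := (h i).min (h' i)
  rw [min_self] at h_min
  refine h_min.congr' ?_
  filter_upwards [self_mem_nhdsWithin] with ε hε
  simp only [Pi.inf_apply, Int.cast_min, mul_min_of_nonneg _ _ (mem_Ioi.1 hε).le]

theorem tendsto_card (hL : RescaledTendsto L a) (hM : RescaledTendsto M b) :
    Tendsto (fun ε : ℝ => ε ^ d * ((latticeBox (L ε) (M ε)).card : ℝ)) (𝓝[>] 0)
      (𝓝 (volume.real (halfBox a b))) := by
  rw [volume_real_halfBox]
  have h_prod : Tendsto (fun ε : ℝ => ∏ i, max (ε * (M ε i : ℝ) - ε * (L ε i : ℝ)) 0) (𝓝[>] 0)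
      (𝓝 (∏ i, max (b i - a i) 0)) :=
    tendsto_finsetProd _ fun i _ => ((hM i).sub (hL i)).max tendsto_const_nhds
  refine h_prod.congr' ?_
  filter_upwards [self_mem_nhdsWithin] with ε hε
  have h_factor (i : Fin d) : max (ε * (M ε i : ℝ) - ε * (L ε i : ℝ)) 0 =
      ε * max ((M ε i : ℝ) - L ε i) 0 := by
    rw [mul_max_of_nonneg _ _ (mem_Ioi.1 hε).le, mul_sub, mul_zero]
  simp only [h_factor, card_latticeBox, Finset.prod_mul_distrib, Finset.prod_const,
    Finset.card_univ, Fintype.card_fin]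

end RescaledTendsto

/-- The least lattice point `L` with `a ≤ ε L` coordinatewise. -/
def rescaledCorner (a : Fin d → ℝ) (ε : ℝ) : Zd d := fun i => ⌈a i / ε⌉

theorem rescaledTendsto_rescaledCorner (a : Fin d → ℝ) :
    RescaledTendsto (rescaledCorner a) a := by
  intro i
  have h_upper : Tendsto (fun ε : ℝ => a i + ε) (𝓝[>] 0) (𝓝 (a i)) := by
    have : Tendsto (fun ε : ℝ => a i + ε) (𝓝 0) (𝓝 (a i + 0)) := tendsto_const_nhds.add tendsto_id
    rw [add_zero] at this
    exact tendsto_nhdsWithin_of_tendsto_nhds this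
  refine tendsto_of_tendsto_of_tendsto_of_le_of_le' tendsto_const_nhds h_upper ?_ ?_ <;>
    filter_upwards [self_mem_nhdsWithin] with ε hε
  · exact (div_le_iff₀' hε).1 (Int.le_ceil (a i / ε))
  · calc ε * (⌈a i / ε⌉ : ℝ) ≤ ε * (a i / ε + 1) :=
          mul_le_mul_of_nonneg_left (Int.ceil_lt_add_one _).le (le_of_lt hε)
      _ = a i + ε := by rw [mul_add, mul_div_cancel₀ _ (ne_of_gt hε), mul_one]

theorem smul_toRd_mem_halfBox_iff {a b : Fin d → ℝ} {ε : ℝ} (hε : 0 < ε) (z : Zd d) :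
    ε • toRd z ∈ halfBox a b ↔
      z ∈ latticeBox (rescaledCorner a ε) (rescaledCorner b ε) := by
  simp only [halfBox, mem_ofPred_eq, PiLp.smul_apply, smul_eq_mul, mem_latticeBox, rescaledCorner,
    Int.ceil_le, Int.lt_ceil, div_le_iff₀' hε, lt_div_iff₀' hε]
  rfl

theorem tsum_halfBox_eq_sum {E : Type*} [AddCommMonoid E] [TopologicalSpace E]
    {a b : Fin d → ℝ} {ε : ℝ} (hε : 0 < ε) (f : Zd d → E) :
    ∑' z, (if ε • toRd z ∈ halfBox a b then f z else 0) =
      ∑ z ∈ latticeBox (rescaledCorner a ε) (rescaledCorner b ε), f z := by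
  simp_rw [smul_toRd_mem_halfBox_iff hε]
  rw [tsum_eq_sum fun z hz => if_neg hz]
  exact Finset.sum_congr rfl fun z hz => if_pos hz

/-! ### The maximal inequality -/

/-- The closed ball of radius `r` about `x` in the sup norm of the lattice. -/
def latticeBall (x : Zd d) (r : ℕ) : Finset (Zd d) := Finset.Icc (x - (r : Zd d)) (x + (r : Zd d))

theorem mem_latticeBall {x z : Zd d} {r : ℕ} :
    z ∈ latticeBall x r ↔ ∀ i, x i - r ≤ z i ∧ z i ≤ x i + r := by
  simp only [latticeBall, Finset.mem_Icc, Pi.le_def, Pi.sub_apply, Pi.add_apply, Pi.natCast_apply,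
    forall_and]

theorem card_latticeBall (x : Zd d) (r : ℕ) : (latticeBall x r).card = (2 * r + 1) ^ d := by
  have h_side (i : Fin d) : (x i + r + 1 - (x i - r)).toNat = 2 * r + 1 := by lia
  simp only [latticeBall, Pi.card_Icc, Int.card_Icc, Pi.sub_apply, Pi.add_apply, Pi.natCast_apply,
    h_side, Finset.prod_const, Finset.card_univ, Fintype.card_fin]

theorem coe_latticeBall (x : Zd d) (r : ℕ) : (latticeBall x r : Set (Zd d)) = closedBall x r := by
  ext z
  simp only [Finset.mem_coe, mem_latticeBall, mem_closedBall, dist_pi_le_iff (Nat.cast_nonneg r),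
    Int.dist_eq, ← Int.cast_sub, ← Int.cast_abs]
  exact forall_congr' fun i => by norm_cast; rw [abs_le]; lia

theorem sum_latticeBall_zero_add {E : Type*} [AddCommMonoid E] (x : Zd d) (r : ℕ) (f : Zd d → E) :
    ∑ z ∈ latticeBall 0 r, f (z + x) = ∑ z ∈ latticeBall x r, f z :=
  Finset.sum_equiv (Equiv.addRight x)
    (fun z => by simp only [mem_latticeBall, Equiv.coe_addRight, Pi.add_apply, Pi.zero_apply]
                 exact forall_congr' fun i => by lia) fun _ _ => rfl

theorem latticeBall_add_subset {x : Zd d} {r s : ℕ} (hx : x ∈ latticeBall 0 r) :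
    latticeBall x s ⊆ latticeBall 0 (r + s) := by
  intro z hz
  rw [mem_latticeBall] at hx hz ⊢
  intro i
  have := hx i
  have := hz i
  simp only [Pi.zero_apply] at *
  lia

theorem exists_disjoint_latticeBall_covering (B : Finset (Zd d)) (ρ : Zd d → ℕ) :
    ∃ S ⊆ B, (S : Set (Zd d)).PairwiseDisjoint (fun x => latticeBall x (ρ x)) ∧
      B ⊆ S.biUnion fun x => latticeBall x (4 * ρ x) := by
  obtain ⟨R, hR⟩ := (B.image fun x => (ρ x : ℝ)).bddAbove
  obtain ⟨S, hSB, h_disj, h_cover⟩ :=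
    Vitali.exists_disjoint_subfamily_covering_enlargement_closedBall (B : Set (Zd d)) id
      (fun x => (ρ x : ℝ)) R (fun x hx => hR (Finset.mem_coe.2 (Finset.mem_image_of_mem _ hx)))
      4 (by norm_num)
  lift S to Finset (Zd d) using B.finite_toSet.subset hSB
  refine ⟨S, Finset.coe_subset.1 hSB, fun x hx y hy hxy => ?_, fun x hx => ?_⟩
  · rw [Function.onFun, ← Finset.disjoint_coe, coe_latticeBall, coe_latticeBall]
    exact h_disj hx hy hxy
  · obtain ⟨y, hy, hxy⟩ := h_cover x hx
    refine Finset.mem_biUnion.2 ⟨y, hy, ?_⟩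
    rw [← Finset.mem_coe, coe_latticeBall, Nat.cast_mul, Nat.cast_ofNat]
    exact hxy (mem_closedBall_self (Nat.cast_nonneg _))

theorem mul_card_le_of_forall_latticeBall {g : Zd d → ℝ≥0∞} {ρ : Zd d → ℕ} {t : ℝ≥0∞}
    {B U : Finset (Zd d)} (hU : ∀ x ∈ B, latticeBall x (ρ x) ⊆ U)
    (hg : ∀ x ∈ B, t * (latticeBall x (ρ x)).card ≤ ∑ z ∈ latticeBall x (ρ x), g z) :
    t * B.card ≤ 4 ^ d * ∑ z ∈ U, g z := by
  obtain ⟨S, hSB, h_disj, h_cover⟩ := exists_disjoint_latticeBall_covering B ρ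
  have h_card (x : Zd d) :
      (latticeBall x (4 * ρ x)).card ≤ 4 ^ d * (latticeBall x (ρ x)).card := by
    rw [card_latticeBall, card_latticeBall, ← mul_pow]
    exact Nat.pow_le_pow_left (by lia) d
  calc t * B.card
      ≤ t * ∑ x ∈ S, 4 ^ d * ((latticeBall x (ρ x)).card : ℝ≥0∞) := by
        gcongr
        exact_mod_cast (Finset.card_le_card h_cover).trans <|
          Finset.card_biUnion_le.trans <| Finset.sum_le_sum fun x _ => h_card x
    _ = 4 ^ d * ∑ x ∈ S, t * (latticeBall x (ρ x)).card := by
        simp only [Finset.mul_sum, mul_left_comm]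
    _ ≤ 4 ^ d * ∑ x ∈ S, ∑ z ∈ latticeBall x (ρ x), g z := by
        gcongr with x hx
        exact hg x (hSB hx)
    _ = 4 ^ d * ∑ z ∈ S.biUnion fun x => latticeBall x (ρ x), g z := by
        rw [Finset.sum_biUnion h_disj]
    _ ≤ 4 ^ d * ∑ z ∈ U, g z := by
        gcongr
        exact Finset.biUnion_subset.2 fun x hx => hU x (hSB hx)

section Action

/-- The points at which some ball average of `f` of radius at most `N` exceeds `t`. -/
def exceedance (d : ℕ) {X : Type*} [AddAction (Zd d) X] (f : X → ℝ≥0∞) (t : ℝ≥0∞) (N : ℕ) :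
    Set X :=
  {x | ∃ r ≤ N, t * (latticeBall (0 : Zd d) r).card < ∑ z ∈ latticeBall (0 : Zd d) r, f (z +ᵥ x)}

theorem sum_abs_le_of_notMem_exceedance {X : Type*} [AddAction (Zd d) X] {f : X → ℝ} {t : ℝ≥0∞}
    (ht : t ≠ ⊤) {ω : X} (hω : ω ∉ ⋃ N, exceedance d (fun ω => ‖f ω‖ₑ) t N) (r : ℕ) :
    ∑ z ∈ latticeBall (0 : Zd d) r, |f (z +ᵥ ω)| ≤ t.toReal * (2 * r + 1) ^ d := by
  have h_le : ∑ z ∈ latticeBall (0 : Zd d) r, ‖f (z +ᵥ ω)‖ₑ ≤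
      t * (latticeBall (0 : Zd d) r).card :=
    not_lt.1 fun h => hω (mem_iUnion.2 ⟨r, r, le_rfl, h⟩)
  have h_real := ENNReal.toReal_mono (ENNReal.mul_ne_top ht (ENNReal.natCast_ne_top _)) h_le
  rw [ENNReal.toReal_sum fun _ _ => enorm_ne_top, ENNReal.toReal_mul, ENNReal.toReal_natCast,
    card_latticeBall] at h_real
  simpa only [toReal_enorm, Real.norm_eq_abs, Nat.cast_pow, Nat.cast_add, Nat.cast_mul,
    Nat.cast_ofNat, Nat.cast_one] using h_real

theorem mul_card_filter_exceedance_le {X : Type*} [AddAction (Zd d) X] (f : X → ℝ≥0∞)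
    (t : ℝ≥0∞) (N : ℕ) (ω : X) :
    t * ((latticeBall (0 : Zd d) N).filter fun x => x +ᵥ ω ∈ exceedance d f t N).card ≤
      4 ^ d * ∑ z ∈ latticeBall (0 : Zd d) (2 * N), f (z +ᵥ ω) := by
  choose! ρ hρN hρ using fun (x : Zd d) (hx : x +ᵥ ω ∈ exceedance d f t N) => hx
  refine mul_card_le_of_forall_latticeBall (g := fun z => f (z +ᵥ ω)) (ρ := ρ) ?_ ?_ <;>
    intro x hx <;> obtain ⟨hxN, hx⟩ := Finset.mem_filter.1 hx
  · refine (latticeBall_add_subset hxN).trans fun z hz => ?_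
    rw [mem_latticeBall] at hz ⊢
    exact fun i => by have := hz i; have := hρN x hx; lia
  · have h_shift := (hρ x hx).le
    simp only [vadd_vadd] at h_shift
    rwa [sum_latticeBall_zero_add x (ρ x) fun z => f (z +ᵥ ω), card_latticeBall,
      ← card_latticeBall x] at h_shift

variable {P : Measure Ω} [AddAction (Zd d) Ω] [MeasurableConstVAdd (Zd d) Ω]

theorem measurable_sum_vadd {f : Ω → ℝ≥0∞} (hf : Measurable f) (S : Finset (Zd d)) :
    Measurable fun ω => ∑ z ∈ S, f (z +ᵥ ω) :=
  Finset.measurable_sum _ fun z _ => hf.comp (measurable_const_vadd z)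

theorem measurableSet_exceedance {f : Ω → ℝ≥0∞} (hf : Measurable f) (t : ℝ≥0∞) (N : ℕ) :
    MeasurableSet (exceedance d f t N) := by
  have h_union : exceedance d f t N = ⋃ r ≤ N, {ω | t * (latticeBall (0 : Zd d) r).card <
      ∑ z ∈ latticeBall (0 : Zd d) r, f (z +ᵥ ω)} := by
    ext ω
    simp only [exceedance, mem_ofPred_eq, mem_iUnion, exists_prop]
  rw [h_union]
  exact MeasurableSet.iUnion fun r => MeasurableSet.iUnion fun _ =>
    measurableSet_lt measurable_const (measurable_sum_vadd hf _)

variable [VAddInvariantMeasure (Zd d) Ω P]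

theorem lintegral_sum_vadd {f : Ω → ℝ≥0∞} (hf : Measurable f) (S : Finset (Zd d)) :
    ∫⁻ ω, ∑ z ∈ S, f (z +ᵥ ω) ∂P = S.card * ∫⁻ ω, f ω ∂P := by
  rw [lintegral_finsetSum (f := fun z ω => f (z +ᵥ ω)) _
    fun z _ => hf.comp (measurable_const_vadd z)]
  simp only [(measurePreserving_vadd _ P).lintegral_comp hf, Finset.sum_const, nsmul_eq_mul]

theorem mul_measure_exceedance_le {f : Ω → ℝ≥0∞} (hf : Measurable f) (t : ℝ≥0∞) (N : ℕ) :
    t * P (exceedance d f t N) ≤ 8 ^ d * ∫⁻ ω, f ω ∂P := by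
  have hE := measurableSet_exceedance (d := d) hf t N
  have h_indicator (ω : Ω) : ∑ x ∈ latticeBall (0 : Zd d) N,
      (exceedance d f t N).indicator 1 (x +ᵥ ω) = (((latticeBall (0 : Zd d) N).filter
        fun x => x +ᵥ ω ∈ exceedance d f t N).card : ℝ≥0∞) := by
    simp only [indicator_apply, Pi.one_apply, Finset.sum_boole]
  have h_double : (latticeBall (0 : Zd d) (2 * N)).card ≤
      2 ^ d * (latticeBall (0 : Zd d) N).card := by
    rw [card_latticeBall, card_latticeBall, ← mul_pow]
    exact Nat.pow_le_pow_left (by lia) d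
  have h_card_ne : ((latticeBall (0 : Zd d) N).card : ℝ≥0∞) ≠ 0 := by
    rw [card_latticeBall]
    positivity
  refine (ENNReal.mul_le_mul_iff_right h_card_ne (ENNReal.natCast_ne_top _)).1 ?_
  calc (latticeBall (0 : Zd d) N).card * (t * P (exceedance d f t N))
      = ∫⁻ ω, t * ∑ x ∈ latticeBall (0 : Zd d) N,
          (exceedance d f t N).indicator 1 (x +ᵥ ω) ∂P := by
        rw [lintegral_const_mul _ (measurable_sum_vadd (measurable_one.indicator hE) _),
          lintegral_sum_vadd (measurable_one.indicator hE), lintegral_indicator_one hE,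
          mul_left_comm]
    _ ≤ ∫⁻ ω, 4 ^ d * ∑ z ∈ latticeBall (0 : Zd d) (2 * N), f (z +ᵥ ω) ∂P := by
        refine lintegral_mono fun ω => ?_
        rw [h_indicator]
        exact mul_card_filter_exceedance_le f t N ω
    _ = 4 ^ d * ((latticeBall (0 : Zd d) (2 * N)).card * ∫⁻ ω, f ω ∂P) := by
        rw [lintegral_const_mul _ (measurable_sum_vadd hf _), lintegral_sum_vadd hf]
    _ ≤ 4 ^ d * ((2 ^ d * (latticeBall (0 : Zd d) N).card) * ∫⁻ ω, f ω ∂P) := by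
        gcongr
        exact_mod_cast h_double
    _ = (latticeBall (0 : Zd d) N).card * (8 ^ d * ∫⁻ ω, f ω ∂P) := by
        rw [show (8 : ℝ≥0∞) = 4 * 2 by norm_num, mul_pow]
        ring

theorem maximal_inequality {f : Ω → ℝ≥0∞} (hf : Measurable f) (t : ℝ≥0∞) :
    t * P (⋃ N, exceedance d f t N) ≤ 8 ^ d * ∫⁻ ω, f ω ∂P := by
  have h_mono : Monotone (exceedance d f t) :=
    fun _ _ hN _ ⟨r, hr, h⟩ => ⟨r, hr.trans hN, h⟩
  rw [h_mono.measure_iUnion, ENNReal.mul_iSup]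
  exact iSup_le fun N => mul_measure_exceedance_le hf t N

end Action

/-! ### The pointwise ergodic theorem along boxes -/

theorem abs_sum_sub_sum_le {ι : Type*} [DecidableEq ι] {f : ι → ℝ} {C : ℝ} (hf : ∀ z, |f z| ≤ C)
    (B B' : Finset ι) :
    |∑ z ∈ B, f z - ∑ z ∈ B', f z| ≤ C * (B.card + B'.card - 2 * (B ∩ B').card) := by
  have h_bound (S : Finset ι) : |∑ z ∈ S, f z| ≤ C * S.card := by
    rw [mul_comm, ← nsmul_eq_mul]
    exact (Finset.abs_sum_le_sum_abs _ _).trans (Finset.sum_le_card_nsmul _ _ _ fun z _ => hf z)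
  have h_card : ((B \ B').card : ℝ) + (B ∩ B').card = B.card := by
    exact_mod_cast Finset.card_sdiff_add_card_inter B B'
  have h_card' : ((B' \ B).card : ℝ) + (B ∩ B').card = B'.card := by
    rw [Finset.inter_comm]
    exact_mod_cast Finset.card_sdiff_add_card_inter B' B
  rw [← Finset.sum_sdiff_sub_sum_sdiff, ← h_card, ← h_card']
  calc |∑ z ∈ B \ B', f z - ∑ z ∈ B' \ B, f z|
      ≤ C * (B \ B').card + C * (B' \ B).card :=
        (abs_sub _ _).trans (add_le_add (h_bound _) (h_bound _))
    _ = _ := by ring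

theorem RescaledTendsto.exists_latticeBox_subset_latticeBall {a b : Fin d → ℝ} {L M : ℝ → Zd d}
    (hL : RescaledTendsto L a) (hM : RescaledTendsto M b) :
    ∃ D > 0, ∀ᶠ ε in 𝓝[>] (0 : ℝ), ∃ r : ℕ,
      latticeBox (L ε) (M ε) ⊆ latticeBall 0 r ∧ ε * (2 * r + 1) ≤ D := by
  obtain ⟨C, hC⟩ := (Finset.univ.image fun i => |a i| + |b i|).bddAbove
  have hC_le (i : Fin d) : |a i| + |b i| ≤ |C| := (hC (by simp)).trans (le_abs_self C)
  have h_corner : ∀ᶠ ε in 𝓝[>] (0 : ℝ), ∀ i,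
      |ε * (L ε i : ℝ)| < |C| + 1 ∧ |ε * (M ε i : ℝ)| < |C| + 1 := by
    refine eventually_all.2 fun i => ((hL i).abs.eventually (gt_mem_nhds ?_)).and
      ((hM i).abs.eventually (gt_mem_nhds ?_)) <;>
    linarith [hC_le i, abs_nonneg (a i), abs_nonneg (b i)]
  refine ⟨2 * (|C| + 1) + 3, by positivity, ?_⟩
  filter_upwards [h_corner, Ioo_mem_nhdsGT (zero_lt_one' ℝ)] with ε h_corner ⟨hε, hε1⟩
  refine ⟨⌈(|C| + 1) / ε⌉₊, fun z hz => mem_latticeBall.2 fun i => ?_, ?_⟩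
  · obtain ⟨hLi, hMi⟩ := h_corner i
    rw [abs_mul, abs_of_pos hε, ← lt_div_iff₀' hε] at hLi hMi
    have hLr := (abs_le.1 (hLi.le.trans (Nat.le_ceil _))).1
    have hMr := (abs_le.1 (hMi.le.trans (Nat.le_ceil _))).2
    have hzi := mem_latticeBox.1 hz i
    norm_cast at hLr hMr
    simp only [Pi.zero_apply]
    lia
  · have h_ceil := mul_lt_mul_of_pos_left (Nat.ceil_lt_add_one (by positivity :
      0 ≤ (|C| + 1) / ε)) hε
    rw [mul_add, mul_div_cancel₀ _ hε.ne'] at h_ceil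
    linarith

/-- The averages of `f` over large lattice boxes converge to `m`: whenever the corners `L ε` and
`M ε`, rescaled by `ε`, converge to `a` and `b`, the sums of `f` over the lattice box, rescaled by
`ε ^ d`, converge to `m` times the volume of the box with corners `a` and `b`. -/
def HasBoxAverage (f : Zd d → ℝ) (m : ℝ) : Prop :=
  ∀ ⦃a b : Fin d → ℝ⦄ ⦃L M : ℝ → Zd d⦄, RescaledTendsto L a → RescaledTendsto M b →
    Tendsto (fun ε : ℝ => ε ^ d * ∑ z ∈ latticeBox (L ε) (M ε), f z) (𝓝[>] 0)
      (𝓝 (volume.real (halfBox a b) * m))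

namespace HasBoxAverage

variable {f g : Zd d → ℝ} {m m' : ℝ}

theorem add (hf : HasBoxAverage f m) (hg : HasBoxAverage g m') :
    HasBoxAverage (fun z => f z + g z) (m + m') := by
  intro a b L M hL hM
  simpa only [Finset.sum_add_distrib, mul_add] using (hf hL hM).add (hg hL hM)

theorem const_mul (c : ℝ) (hf : HasBoxAverage f m) :
    HasBoxAverage (fun z => c * f z) (c * m) := by
  intro a b L M hL hM
  simpa only [← Finset.mul_sum, mul_left_comm c] using (hf hL hM).const_mul c

theorem const (c : ℝ) : HasBoxAverage (fun _ : Zd d => c) c := by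
  intro a b L M hL hM
  simpa only [Finset.sum_const, nsmul_eq_mul, mul_assoc] using (hL.tendsto_card hM).mul_const c

theorem sub_shift {C : ℝ} (hf : ∀ z, |f z| ≤ C) (w : Zd d) :
    HasBoxAverage (fun z => f z - f (z + w)) 0 := by
  intro a b L M hL hM
  rw [mul_zero]
  have h_symmDiff := (((hL.tendsto_card hM).add ((hL.add_const w).tendsto_card
    (hM.add_const w))).sub (((hL.sup (hL.add_const w)).tendsto_card
      (hM.inf (hM.add_const w))).const_mul 2)).const_mul C
  rw [show C * (volume.real (halfBox a b) + volume.real (halfBox a b) -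
    2 * volume.real (halfBox a b)) = 0 by ring] at h_symmDiff
  refine squeeze_zero_norm' ?_ h_symmDiff
  filter_upwards [self_mem_nhdsWithin] with ε hε
  have h_pow : 0 ≤ ε ^ d := pow_nonneg (mem_Ioi.1 hε).le d
  rw [Finset.sum_sub_distrib, sum_latticeBox_add, norm_mul, Real.norm_of_nonneg h_pow,
    ← latticeBox_inter]
  calc ε ^ d * ‖∑ z ∈ latticeBox (L ε) (M ε), f z -
        ∑ z ∈ latticeBox (L ε + w) (M ε + w), f z‖
      ≤ ε ^ d * (C * _) := mul_le_mul_of_nonneg_left (abs_sum_sub_sum_le hf _ _) h_pow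
    _ = _ := by ring

theorem of_forall_approx (h : ∀ η > 0, ∃ g m', HasBoxAverage g m' ∧ |m' - m| ≤ η ∧
    ∀ r : ℕ, ∑ z ∈ latticeBall 0 r, |f z - g z| ≤ η * (2 * r + 1) ^ d) : HasBoxAverage f m := by
  intro a b L M hL hM
  obtain ⟨D, hD, h_ball⟩ := hL.exists_latticeBox_subset_latticeBall hM
  set v := volume.real (halfBox a b)
  have hv : 0 ≤ v := measureReal_nonneg
  rw [Metric.tendsto_nhds]
  intro δ hδ
  obtain ⟨g, m', hg, hm, h_approx⟩ := h (δ / (2 * (D ^ d + v))) (by positivity)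
  filter_upwards [Metric.tendsto_nhds.1 (hg hL hM) (δ / 2) (half_pos hδ), h_ball,
    self_mem_nhdsWithin] with ε h_near ⟨r, h_sub, hr⟩ (hε : 0 < ε)
  have h_sum : |ε ^ d * ∑ z ∈ latticeBox (L ε) (M ε), f z -
      ε ^ d * ∑ z ∈ latticeBox (L ε) (M ε), g z| ≤ δ / (2 * (D ^ d + v)) * D ^ d := by
    rw [← mul_sub, ← Finset.sum_sub_distrib, abs_mul, abs_of_pos (pow_pos hε d)]
    calc ε ^ d * |∑ z ∈ latticeBox (L ε) (M ε), (f z - g z)|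
        ≤ ε ^ d * ∑ z ∈ latticeBall 0 r, |f z - g z| := by
          gcongr
          exact (Finset.abs_sum_le_sum_abs _ _).trans
            (Finset.sum_le_sum_of_subset_of_nonneg h_sub fun _ _ _ => abs_nonneg _)
      _ ≤ ε ^ d * (δ / (2 * (D ^ d + v)) * (2 * r + 1) ^ d) := by
          gcongr
          exact h_approx r
      _ = δ / (2 * (D ^ d + v)) * (ε * (2 * r + 1)) ^ d := by rw [mul_pow]; ring
      _ ≤ δ / (2 * (D ^ d + v)) * D ^ d := by gcongr
  have h_mean : |v * m' - v * m| ≤ δ / (2 * (D ^ d + v)) * v := by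
    rw [← mul_sub, abs_mul, abs_of_nonneg hv, mul_comm]
    gcongr
  have h_half : δ / (2 * (D ^ d + v)) * D ^ d + δ / (2 * (D ^ d + v)) * v = δ / 2 := by
    field_simp
  have h_split := abs_sub_le (ε ^ d * ∑ z ∈ latticeBox (L ε) (M ε), f z)
    (ε ^ d * ∑ z ∈ latticeBox (L ε) (M ε), g z) (v * m)
  have h_split' := abs_sub_le (ε ^ d * ∑ z ∈ latticeBox (L ε) (M ε), g z) (v * m') (v * m)
  rw [Real.dist_eq] at h_near ⊢
  linarith

end HasBoxAverage

section Ergodic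

variable {P : Measure Ω}

theorem ae_eq_const_of_forall_ae_eq_vadd (G : Type*) {X : Type*} [VAdd G Ω] [ErgodicVAdd G Ω P]
    [Nonempty X] [MeasurableSpace X] [MeasurableSpace.CountablySeparated X] {f : Ω → X}
    (hf : Measurable f) (h_inv : ∀ g : G, (fun ω => f (g +ᵥ ω)) =ᵐ[P] f) :
    ∃ c, f =ᵐ[P] fun _ => c :=
  exists_eventuallyEq_const_of_forall_separating MeasurableSet fun U hU =>
    eventuallyConst_set.1 <| aeconst_of_forall_preimage_vadd_ae_eq G (hf hU).nullMeasurableSet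
      fun g => (h_inv g).preimage U

theorem ergodicVAdd_of_forall_preimage_eq {G : Type*} [AddGroup G] [Countable G] [AddAction G Ω]
    [MeasurableConstVAdd G Ω] [VAddInvariantMeasure G Ω P]
    (h : ∀ s : Set Ω, MeasurableSet s → (∀ g : G, (g +ᵥ ·) ⁻¹' s = s) → P s = 0 ∨ P sᶜ = 0) :
    ErgodicVAdd G Ω P where
  aeconst_of_forall_preimage_vadd_ae_eq {s} hs h_inv := by
    have h_core : (⋂ g : G, (g +ᵥ ·) ⁻¹' s : Set Ω) =ᵐ[P] s := by
      simpa only [iInter_const] using Filter.EventuallyEq.countable_iInter h_inv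
    refine EventuallyConst.congr (eventuallyConst_set'.2 ?_) h_core
    have h_zero_one := h (⋂ g : G, (g +ᵥ ·) ⁻¹' s)
      (MeasurableSet.iInter fun g => measurable_const_vadd g hs) fun g => by
        simp only [preimage_iInter, ← preimage_comp, Function.comp_def, vadd_vadd]
        exact (Equiv.addRight g).surjective.iInter_comp fun k => (k +ᵥ ·) ⁻¹' s
    exact h_zero_one.imp ae_eq_empty.2 ae_eq_univ.2

theorem abs_integral_sub_le {f g : Ω → ℝ} (hf : Integrable f P) (hg : Integrable g P) {t : ℝ≥0∞}
    (ht : t ≠ ⊤) (h : ∫⁻ ω, ‖f ω - g ω‖ₑ ∂P ≤ t) : |∫ ω, g ω ∂P - ∫ ω, f ω ∂P| ≤ t.toReal := by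
  rw [abs_sub_comm, ← integral_sub hf hg, ← Real.norm_eq_abs, ← toReal_enorm]
  exact ENNReal.toReal_mono ht ((enorm_integral_le_lintegral_enorm _).trans h)

/-- The function `f` is integrable and, along almost every orbit of the `ℤ^d`-action, has box
averages equal to its mean. -/
def HasErgodicAverage (d : ℕ) [AddAction (Zd d) Ω] (P : Measure Ω) (f : Ω → ℝ) : Prop :=
  Integrable f P ∧ ∀ᵐ ω ∂P, HasBoxAverage (fun z : Zd d => f (z +ᵥ ω)) (∫ x, f x ∂P)

namespace HasErgodicAverage

variable [AddAction (Zd d) Ω] {f g : Ω → ℝ}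

theorem add (hf : HasErgodicAverage d P f) (hg : HasErgodicAverage d P g) :
    HasErgodicAverage d P (f + g) := by
  refine ⟨hf.1.add hg.1, ?_⟩
  filter_upwards [hf.2, hg.2] with ω hfω hgω
  rw [integral_add' hf.1 hg.1]
  exact hfω.add hgω

theorem const_smul (c : ℝ) (hf : HasErgodicAverage d P f) : HasErgodicAverage d P (c • f) := by
  refine ⟨hf.1.smul c, ?_⟩
  filter_upwards [hf.2] with ω hfω
  simp only [Pi.smul_apply, smul_eq_mul, integral_const_mul]
  exact hfω.const_mul c

theorem const [IsProbabilityMeasure P] (c : ℝ) : HasErgodicAverage d P fun _ => c := by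
  refine ⟨integrable_const c, Eventually.of_forall fun _ => ?_⟩
  rw [integral_const, probReal_univ, one_smul]
  exact HasBoxAverage.const c

variable [VAddInvariantMeasure (Zd d) Ω P]

theorem congr (hf : HasErgodicAverage d P f) (hfg : f =ᵐ[P] g) : HasErgodicAverage d P g := by
  refine ⟨hf.1.congr hfg, ?_⟩
  filter_upwards [hf.2, ae_all_iff.2 fun z : Zd d => (tendsto_vadd_ae P z).eventually hfg]
    with ω hω h_orbit
  simpa only [h_orbit, integral_congr_ae hfg] using hω

theorem sub_vadd [MeasurableConstVAdd (Zd d) Ω] {C : ℝ} (hf : Integrable f P)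
    (h_bound : ∀ ω, |f ω| ≤ C) (w : Zd d) :
    HasErgodicAverage d P fun ω => f ω - f (w +ᵥ ω) := by
  have hf_shift : Integrable (fun ω => f (w +ᵥ ω)) P :=
    (measurePreserving_vadd w P).integrable_comp_of_integrable hf
  refine ⟨hf.sub hf_shift, Eventually.of_forall fun ω => ?_⟩
  have h_mean : ∫ x, f (w +ᵥ x) ∂P = ∫ x, f x ∂P :=
    (measurePreserving_vadd w P).integral_comp' (f := MeasurableEquiv.vadd w) f
  rw [integral_sub hf hf_shift, h_mean, sub_self]
  simp only [vadd_vadd, add_comm w]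
  exact HasBoxAverage.sub_shift (fun z => h_bound (z +ᵥ ω)) w

end HasErgodicAverage

variable [IsProbabilityMeasure P] [AddAction (Zd d) Ω]

/-- The classes in `L²` of functions with ergodic averages. -/
def ergodicSubmodule (d : ℕ) [AddAction (Zd d) Ω] (P : Measure Ω)
    [IsProbabilityMeasure P] [VAddInvariantMeasure (Zd d) Ω P] : Submodule ℝ (Lp ℝ 2 P) where
  carrier := {x | HasErgodicAverage d P x}
  zero_mem' := (HasErgodicAverage.const 0).congr (Lp.coeFn_zero ℝ 2 P).symm
  add_mem' {x y} hx hy := (HasErgodicAverage.add hx hy).congr (Lp.coeFn_add x y).symm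
  smul_mem' c x hx := (HasErgodicAverage.const_smul c hx).congr (Lp.coeFn_smul c x).symm

theorem integral_mul_eq_zero_of_mem_orthogonal
    [VAddInvariantMeasure (Zd d) Ω P] {x : Lp ℝ 2 P} (hx : x ∈ (ergodicSubmodule d P)ᗮ)
    {g : Ω → ℝ} (hg : MemLp g 2 P) (hg_erg : HasErgodicAverage d P g) :
    ∫ ω, x ω * g ω ∂P = 0 := by
  rw [← (Submodule.mem_orthogonal' _ _).1 hx (hg.toLp g) (hg_erg.congr hg.coeFn_toLp.symm),
    L2.inner_def]
  refine integral_congr_ae ?_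
  filter_upwards [hg.coeFn_toLp] with ω hω
  rw [hω, Real.inner_apply, mul_comm]

variable [MeasurableConstVAdd (Zd d) Ω]

theorem ae_eq_vadd_of_mem_orthogonal [VAddInvariantMeasure (Zd d) Ω P] {x : Lp ℝ 2 P}
    (hx : x ∈ (ergodicSubmodule d P)ᗮ) (z : Zd d) : (fun ω => x (z +ᵥ ω)) =ᵐ[P] x := by
  have hx_int : Integrable x P := (Lp.memLp x).integrable one_le_two
  have hmp := measurePreserving_vadd z P
  refine (hmp.integrable_comp_of_integrable hx_int).ae_eq_of_forall_setIntegral_eq _ _ hx_int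
    fun s hs _ => ?_
  have hs' : MeasurableSet ((-z +ᵥ ·) ⁻¹' s) := measurable_const_vadd (-z) hs
  have h_preimage : (z +ᵥ ·) ⁻¹' ((-z +ᵥ ·) ⁻¹' s) = s := by
    simp only [← preimage_comp, Function.comp_def, neg_vadd_vadd, preimage_id']
  set s' := (-z +ᵥ ·) ⁻¹' s
  have h_coboundary := integral_mul_eq_zero_of_mem_orthogonal hx
    (((memLp_const (1 : ℝ)).indicator hs').sub ((memLp_const 1).indicator hs))
    (by
      have := HasErgodicAverage.sub_vadd (P := P) (C := 1)
        ((integrable_const (1 : ℝ)).indicator hs') (fun ω => by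
          by_cases hω : ω ∈ s' <;> simp [hω]) z
      rw [← h_preimage]
      exact this)
  have h_pair (t : Set Ω) (ω : Ω) : x ω * t.indicator (fun _ => 1) ω = t.indicator x ω := by
    by_cases hω : ω ∈ t <;> simp [hω]
  simp only [Pi.sub_apply, mul_sub, h_pair] at h_coboundary
  rw [integral_sub (hx_int.indicator hs') (hx_int.indicator hs), integral_indicator hs',
    integral_indicator hs, sub_eq_zero] at h_coboundary
  rw [← h_coboundary, ← hmp.setIntegral_preimage_emb (measurableEmbedding_const_vadd z) x s',
    h_preimage]
  rfl

theorem topologicalClosure_ergodicSubmodule [ErgodicVAdd (Zd d) Ω P] :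
    (ergodicSubmodule d P).topologicalClosure = ⊤ := by
  rw [Submodule.topologicalClosure_eq_top_iff, Submodule.eq_bot_iff]
  intro x hx
  obtain ⟨c, hc⟩ := ae_eq_const_of_forall_ae_eq_vadd (Zd d) (Lp.stronglyMeasurable x).measurable
    (ae_eq_vadd_of_mem_orthogonal hx)
  have h_mean := integral_mul_eq_zero_of_mem_orthogonal hx (memLp_const 1) (.const 1)
  simp only [mul_one, integral_congr_ae hc, integral_const, probReal_univ, one_smul] at h_mean
  rw [Lp.eq_zero_iff_ae_eq_zero]
  rwa [h_mean] at hc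

theorem exists_hasErgodicAverage_lintegral_le [ErgodicVAdd (Zd d) Ω P] {f : Ω → ℝ}
    (hf : Integrable f P) {δ : ℝ≥0∞} (hδ : δ ≠ 0) :
    ∃ g, Measurable g ∧ HasErgodicAverage d P g ∧ ∫⁻ ω, ‖f ω - g ω‖ₑ ∂P ≤ δ := by
  have hδ2 : 0 < δ / 2 := ENNReal.half_pos hδ
  obtain ⟨s, hs, -⟩ := (memLp_one_iff_integrable.2 hf).exists_simpleFunc_eLpNorm_sub_lt
    ENNReal.one_ne_top hδ2.ne'
  have hs_mem : MemLp s 2 P := SimpleFunc.memLp_of_isFiniteMeasure s 2 P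
  have hs_closure : hs_mem.toLp s ∈ closure (ergodicSubmodule d P : Set (Lp ℝ 2 P)) := by
    rw [← Submodule.topologicalClosure_coe, topologicalClosure_ergodicSubmodule]
    exact Submodule.mem_top
  obtain ⟨y, hy, h_edist⟩ := EMetric.mem_closure_iff.1 hs_closure (δ / 2) hδ2
  have hy_meas := Lp.stronglyMeasurable y
  refine ⟨y, hy_meas.measurable, hy, ?_⟩
  have h_sy : eLpNorm (⇑s - ⇑y) 1 P ≤ δ / 2 := by
    rw [Lp.edist_def, eLpNorm_congr_ae (hs_mem.coeFn_toLp.sub (EventuallyEq.refl _ _))] at h_edist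
    exact (eLpNorm_le_eLpNorm_of_exponent_le one_le_two
      (s.stronglyMeasurable.sub hy_meas).aestronglyMeasurable).trans h_edist.le
  calc ∫⁻ ω, ‖f ω - y ω‖ₑ ∂P = eLpNorm ((f - ⇑s) + (⇑s - ⇑y)) 1 P := by
        rw [sub_add_sub_cancel, eLpNorm_one_eq_lintegral_enorm]
        rfl
    _ ≤ eLpNorm (f - ⇑s) 1 P + eLpNorm (⇑s - ⇑y) 1 P :=
        eLpNorm_add_le (hf.aestronglyMeasurable.sub s.aestronglyMeasurable)
          (s.stronglyMeasurable.sub hy_meas).aestronglyMeasurable le_rfl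
    _ ≤ δ / 2 + δ / 2 := add_le_add hs.le h_sy
    _ = δ := ENNReal.add_halves δ

theorem pointwise_ergodic_theorem_of_measurable [ErgodicVAdd (Zd d) Ω P] {f : Ω → ℝ}
    (hf_meas : Measurable f) (hf : Integrable f P) : HasErgodicAverage d P f := by
  have h_two_ne (m : ℕ) : (2⁻¹ : ℝ≥0∞) ^ m ≠ 0 := by simp
  have h_two_top (m : ℕ) : (2⁻¹ : ℝ≥0∞) ^ m ≠ ⊤ := ENNReal.pow_ne_top (by simp)
  choose g hg_meas hg h_approx using fun m : ℕ =>
    exists_hasErgodicAverage_lintegral_le (d := d) hf (mul_ne_zero (h_two_ne m) (h_two_ne m))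
  have h_bad (m : ℕ) :
      P (⋃ N, exceedance d (fun ω => ‖f ω - g m ω‖ₑ) (2⁻¹ ^ m) N) ≤ 8 ^ d * 2⁻¹ ^ m := by
    refine (ENNReal.mul_le_mul_iff_right (h_two_ne m) (h_two_top m)).1 ?_
    refine (maximal_inequality (hf_meas.sub (hg_meas m)).enorm _).trans ?_
    rw [mul_left_comm]
    gcongr
    exact h_approx m
  have h_summable : ∑' m, P (⋃ N, exceedance d (fun ω => ‖f ω - g m ω‖ₑ) (2⁻¹ ^ m) N) ≠ ⊤ := by
    refine ne_top_of_le_ne_top ?_ (ENNReal.tsum_le_tsum h_bad)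
    rw [ENNReal.tsum_mul_left, ENNReal.tsum_geometric, ENNReal.one_sub_inv_two]
    exact ENNReal.mul_ne_top (ENNReal.pow_ne_top (by simp)) (by simp)
  refine ⟨hf, ?_⟩
  filter_upwards [ae_eventually_notMem h_summable, ae_all_iff.2 fun m => (hg m).2]
    with ω h_notMem h_avg
  refine .of_forall_approx fun η hη => ?_
  have h_small : ∀ᶠ m : ℕ in atTop, (2⁻¹ : ℝ) ^ m < η :=
    (tendsto_pow_atTop_nhds_zero_of_lt_one (by norm_num) (by norm_num)).eventually
      (gt_mem_nhds hη)
  obtain ⟨m, hm_notMem, hm⟩ := (h_notMem.and h_small).exists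
  have h_toReal : ((2⁻¹ : ℝ≥0∞) ^ m).toReal ≤ η := by simpa using hm.le
  refine ⟨_, _, h_avg m, (abs_integral_sub_le hf (hg m).1 (h_two_top m) ?_).trans h_toReal,
    fun r => ?_⟩
  · exact (h_approx m).trans (mul_le_of_le_one_left' (pow_le_one₀ (by simp) (by simp)))
  · exact (sum_abs_le_of_notMem_exceedance (f := fun ω => f ω - g m ω) (h_two_top m)
      hm_notMem r).trans (mul_le_mul_of_nonneg_right h_toReal (by positivity))

theorem pointwise_ergodic_theorem [ErgodicVAdd (Zd d) Ω P] {f : Ω → ℝ} (hf : Integrable f P) :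
    HasErgodicAverage d P f :=
  (pointwise_ergodic_theorem_of_measurable hf.1.stronglyMeasurable_mk.measurable
    (hf.congr hf.1.ae_eq_mk)).congr hf.1.ae_eq_mk.symm

end Ergodic

/-! ### Energies of correctors -/

theorem toRd_add (z w : Zd d) : toRd (z + w) = toRd z + toRd w := by
  ext i
  exact Int.cast_add (z i) (w i)

theorem toRd_sub (z w : Zd d) : toRd (z - w) = toRd z - toRd w := by
  ext i
  exact Int.cast_sub (z i) (w i)

theorem toRd_mem_cube_iff {k : ℕ} {z : Zd d} : toRd z ∈ cube d k ↔ z ∈ latticeBox 0 (k : Zd d) := by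
  rw [mem_latticeBox]
  exact forall_congr' fun i => by
    simp only [Pi.zero_apply, Pi.natCast_apply]
    exact and_congr Int.cast_nonneg_iff (Int.cast_lt (n := (k : ℤ)))

theorem norm_toRd_le_irange {E0 : Finset (Zd d)} {b : Zd d} (hb : b ∈ E0) :
    ‖toRd b‖ ≤ irange d E0 :=
  le_max_of_le_right <| le_csSup (E0.finite_toSet.image _).bddAbove
    (mem_image_of_mem _ (Finset.mem_coe.2 hb))

/-- The fields on `εℤ^d` vanishing within distance `ε R` of the complement of `A`; as for
`energyE`, a field on `εℤ^d` is regarded as a function on `ℤ^d`. -/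
def correctorSpace (n : ℕ) (E0 : Finset (Zd d)) (ε : ℝ) (A : Set (Rd d)) :
    Submodule ℝ (Zd d → Rn n) where
  carrier := {φ | ∀ z, infDist (ε • toRd z) Aᶜ ≤ ε * irange d E0 → φ z = 0}
  zero_mem' _ _ := rfl
  add_mem' hφ hψ z hz := by rw [Pi.add_apply, hφ z hz, hψ z hz, add_zero]
  smul_mem' c φ hφ z hz := by rw [Pi.smul_apply, hφ z hz, smul_zero]

section CorrectorSpace

variable {E0 : Finset (Zd d)} {k : ℕ} {φ : Zd d → Rn n}

theorem mem_correctorSpace_one {A : Set (Rd d)} : φ ∈ correctorSpace n E0 1 A ↔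
    ∀ z, infDist (toRd z) Aᶜ ≤ irange d E0 → φ z = 0 := by
  simp only [correctorSpace, one_smul, one_mul]
  rfl

theorem eq_zero_of_mem_correctorSpace {A : Set (Rd d)} (hφ : φ ∈ correctorSpace n E0 1 A)
    {z w : Zd d} (hw : toRd w ∉ A) (hzw : ‖toRd z - toRd w‖ ≤ irange d E0) : φ z = 0 :=
  mem_correctorSpace_one.1 hφ z <|
    (infDist_le_dist_of_mem hw).trans ((dist_eq_norm _ _).trans_le hzw)

theorem eq_zero_of_notMem_latticeBox (hφ : φ ∈ correctorSpace n E0 1 (cube d k)) {z : Zd d}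
    (hz : z ∉ latticeBox 0 (k : Zd d)) : φ z = 0 := by
  refine eq_zero_of_mem_correctorSpace hφ (fun h => hz (toRd_mem_cube_iff.1 h)) ?_
  rw [sub_self, norm_zero]
  exact le_max_of_le_left (by positivity)

theorem add_eq_zero_of_notMem_latticeBox (hφ : φ ∈ correctorSpace n E0 1 (cube d k)) {z b : Zd d}
    (hb : b ∈ E0) (hz : z ∉ latticeBox 0 (k : Zd d)) : φ (z + b) = 0 := by
  refine eq_zero_of_mem_correctorSpace hφ (fun h => hz (toRd_mem_cube_iff.1 h)) ?_
  rw [toRd_add, add_sub_cancel_left]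
  exact norm_toRd_le_irange hb

theorem norm_le_sum_of_mem_correctorSpace (hφ : φ ∈ correctorSpace n E0 1 (cube d k)) (z : Zd d) :
    ‖φ z‖ ≤ ∑ w ∈ latticeBox 0 (k : Zd d), ‖φ w‖ := by
  by_cases hz : z ∈ latticeBox 0 (k : Zd d)
  · exact Finset.single_le_sum (f := fun w => ‖φ w‖) (fun _ _ => norm_nonneg _) hz
  · rw [eq_zero_of_notMem_latticeBox hφ hz, norm_zero]
    positivity

end CorrectorSpace

/-- The energy at the site `z` of the affine field of slope `F` perturbed by `φ`, in the
environment whose potential at the edge from `z` to `z + b` is `v z b`. -/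
def siteEnergy (E0 : Finset (Zd d)) (v : Zd d → Zd d → Rn n → ℝ) (F : Rd d →L[ℝ] Rn n)
    (φ : Zd d → Rn n) (z : Zd d) : ℝ :=
  ∑ b ∈ E0, v z b (‖toRd b‖⁻¹ • (F (toRd b) + (φ (z + b) - φ z)))

/-- The energy of the corrector `φ` on the periodicity cell `[0, k)^d`. -/
def cellEnergy (E0 : Finset (Zd d)) (v : Zd d → Zd d → Rn n → ℝ) (F : Rd d →L[ℝ] Rn n) (k : ℕ)
    (φ : Zd d → Rn n) : ℝ :=
  ∑ z ∈ latticeBox 0 (k : Zd d), siteEnergy E0 v F φ z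

/-- The energy `E_ε` on the box `∏ᵢ [aᵢ, bᵢ)` of the affine field of slope `F` perturbed by the
rescaled field `ε φ (· / ε)`. -/
def rescaledEnergy (E0 : Finset (Zd d)) (v : Zd d → Zd d → Rn n → ℝ) (F : Rd d →L[ℝ] Rn n)
    (a b : Fin d → ℝ) (ε : ℝ) (φ : Zd d → Rn n) : ℝ :=
  ε ^ d * ∑ z ∈ latticeBox (rescaledCorner a ε) (rescaledCorner b ε), siteEnergy E0 v F φ z

/-- The `s`-th moment on the box `∏ᵢ [aᵢ, bᵢ)` of the rescaled field `ε φ (· / ε)`. -/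
def rescaledMoment (s : ℝ) (a b : Fin d → ℝ) (ε : ℝ) (φ : Zd d → Rn n) : ℝ :=
  ε ^ d * ∑ z ∈ latticeBox (rescaledCorner a ε) (rescaledCorner b ε), ‖ε • φ z‖ ^ s

/-- The edge potentials seen from the configuration `ω`. -/
def environment {X : Type*} (τ : Zd d → X → X) (V : Zd d → X → Rn n → ℝ) (ω : X) :
    Zd d → Zd d → Rn n → ℝ :=
  fun z b => V b (τ z ω)

theorem environment_translate {X : Type*} {τ : Zd d → X → X}
    (hτ_add : ∀ x y : Zd d, τ (x + y) = τ x ∘ τ y) (V : Zd d → X → Rn n → ℝ) (ω : X) (y : Zd d) :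
    environment τ V (τ y ω) = fun z => environment τ V ω (z + y) := by
  funext z b
  simp only [environment, hτ_add, Function.comp_apply]

section SiteEnergy

variable {E0 : Finset (Zd d)} {v : Zd d → Zd d → Rn n → ℝ}

theorem siteEnergy_nonneg (hv : ∀ z, ∀ b ∈ E0, ∀ r, 0 ≤ v z b r) (F : Rd d →L[ℝ] Rn n)
    (φ : Zd d → Rn n) (z : Zd d) : 0 ≤ siteEnergy E0 v F φ z :=
  Finset.sum_nonneg fun b hb => hv z b hb _

theorem siteEnergy_congr {F : Rd d →L[ℝ] Rn n} {φ ψ : Zd d → Rn n} {z : Zd d} (hz : φ z = ψ z)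
    (h : ∀ b ∈ E0, φ (z + b) = ψ (z + b)) : siteEnergy E0 v F φ z = siteEnergy E0 v F ψ z :=
  Finset.sum_congr rfl fun b hb => by rw [hz, h b hb]

theorem siteEnergy_translate (F : Rd d →L[ℝ] Rn n) (φ : Zd d → Rn n) (y z : Zd d) :
    siteEnergy E0 v F (fun w => φ (w - y)) (z + y) = siteEnergy E0 (fun w => v (w + y)) F φ z := by
  simp only [siteEnergy, add_right_comm z y, add_sub_cancel_right]

theorem continuous_siteEnergy {z : Zd d} (hv : ∀ b ∈ E0, Continuous (v z b))
    (F : Rd d →L[ℝ] Rn n) : Continuous fun φ => siteEnergy E0 v F φ z :=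
  continuous_finsetSum _ fun b hb => (hv b hb).comp (by fun_prop)

theorem cellEnergy_nonneg (hv : ∀ z, ∀ b ∈ E0, ∀ r, 0 ≤ v z b r) (F : Rd d →L[ℝ] Rn n) (k : ℕ)
    (φ : Zd d → Rn n) : 0 ≤ cellEnergy E0 v F k φ :=
  Finset.sum_nonneg fun z _ => siteEnergy_nonneg hv F φ z

theorem continuous_cellEnergy (hv : ∀ z, ∀ b ∈ E0, Continuous (v z b)) (F : Rd d →L[ℝ] Rn n)
    (k : ℕ) : Continuous (cellEnergy E0 v F k) :=
  continuous_finsetSum _ fun z _ => continuous_siteEnergy (hv z) F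

theorem continuous_rescaledEnergy (hv : ∀ z, ∀ b ∈ E0, Continuous (v z b))
    (F : Rd d →L[ℝ] Rn n) (a b : Fin d → ℝ) (ε : ℝ) :
    Continuous (rescaledEnergy E0 v F a b ε) :=
  (continuous_finsetSum _ fun z _ => continuous_siteEnergy (hv z) F).const_mul _

end SiteEnergy

section Energy

variable {X : Type*} (τ : Zd d → X → X) (E0 : Finset (Zd d)) (V : Zd d → X → Rn n → ℝ) (ω : X)
  (F : Rd d →L[ℝ] Rn n)

theorem energy1_cube (k : ℕ) (φ : Zd d → Rn n) :
    energy1 τ E0 V ω (fun z => F (toRd z) + φ z) (cube d k) =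
      cellEnergy E0 (environment τ V ω) F k φ := by
  simp only [energy1, toRd_mem_cube_iff]
  rw [tsum_eq_sum fun z hz => if_neg hz]
  refine Finset.sum_congr rfl fun z hz => (if_pos hz).trans <| Finset.sum_congr rfl fun b _ => ?_
  have h_increment : F (toRd (z + b)) + φ (z + b) - (F (toRd z) + φ z) =
      F (toRd b) + (φ (z + b) - φ z) := by
    rw [toRd_add, map_add]
    abel
  rw [h_increment]
  rfl

theorem mF_cube (k : ℕ) : mF τ E0 V ω F (cube d k) =
    ⨅ φ : correctorSpace n E0 1 (cube d k), cellEnergy E0 (environment τ V ω) F k φ := by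
  unfold mF
  simp only [energy1_cube]
  exact congrArg (fun p : (Zd d → Rn n) → Prop =>
      ⨅ φ : {φ // p φ}, cellEnergy E0 (environment τ V ω) F k φ)
    (funext fun φ => propext mem_correctorSpace_one.symm)

theorem mF_cube_nonneg {V : Zd d → X → Rn n → ℝ}
    (hV_nonneg : ∀ b ∈ E0, ∀ ω r, 0 ≤ V b ω r) (k : ℕ) : 0 ≤ mF τ E0 V ω F (cube d k) := by
  rw [mF_cube]
  exact Real.iInf_nonneg fun φ => cellEnergy_nonneg (fun z b hb => hV_nonneg b hb (τ z ω)) F k φ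

theorem mF_cube_one_le {V : Zd d → X → Rn n → ℝ}
    (hV_nonneg : ∀ b ∈ E0, ∀ ω r, 0 ≤ V b ω r) :
    mF τ E0 V ω F (cube d 1) ≤ siteEnergy E0 (environment τ V ω) F 0 0 := by
  have h_unit_cell : latticeBox (0 : Zd d) ((1 : ℕ) : Zd d) = {0} := by
    ext z
    simp only [mem_latticeBox, Finset.mem_singleton, funext_iff]
    exact forall_congr' fun i => by simp only [Pi.zero_apply, Pi.natCast_apply]; lia
  have h_bdd : BddBelow (range fun φ : correctorSpace n E0 1 (cube d 1) =>
      cellEnergy E0 (environment τ V ω) F 1 φ) :=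
    ⟨0, forall_mem_range.2 fun φ =>
      cellEnergy_nonneg (fun z b hb => hV_nonneg b hb (τ z ω)) F 1 φ⟩
  rw [mF_cube]
  refine (ciInf_le h_bdd 0).trans_eq ?_
  rw [cellEnergy, h_unit_cell, Finset.sum_singleton]
  rfl

theorem energyE_halfBox {ε : ℝ} (hε : 0 < ε) (a b : Fin d → ℝ) (c : Rn n) (φ : Zd d → Rn n) :
    energyE τ E0 V ε ω (fun z => F (ε • toRd z) + c + ε • φ z) (halfBox a b) =
      rescaledEnergy E0 (environment τ V ω) F a b ε φ := by
  rw [energyE, tsum_halfBox_eq_sum hε]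
  refine congrArg _ <| Finset.sum_congr rfl fun z _ => Finset.sum_congr rfl fun b _ => ?_
  have h_increment : F (ε • toRd (z + b)) + c + ε • φ (z + b) - (F (ε • toRd z) + c + ε • φ z) =
      ε • (F (toRd b) + (φ (z + b) - φ z)) := by
    simp only [toRd_add, map_smul, map_add, smul_add, smul_sub]
    abel
  rw [h_increment, smul_smul, mul_inv, mul_right_comm, inv_mul_cancel₀ hε.ne', one_mul]
  rfl

end Energy

/-! ### Gluing correctors along a tiling -/

/-- The corner of the cell containing `z` in the tiling of `ℤ^d` by cubes of side `k` with
corners in `x + kℤ^d`. -/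
def tileCorner (k : ℕ) (x z : Zd d) : Zd d := fun i => z i - (z i - x i) % k

section Tiling

variable {k : ℕ}

theorem tileCorner_eq_of_sub_mem {x z w : Zd d}
    (h : w - tileCorner k x z ∈ latticeBox 0 (k : Zd d)) : tileCorner k x w = tileCorner k x z := by
  funext i
  obtain ⟨h_lower, h_upper⟩ := mem_latticeBox.1 h i
  simp only [Pi.sub_apply, Pi.zero_apply, Pi.natCast_apply, tileCorner] at h_lower h_upper ⊢
  have h_shift : w i - (z i - (z i - x i) % k) = w i - x i - k * ((z i - x i) / k) := by
    linarith [Int.emod_add_mul_ediv (z i - x i) k]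
  rw [h_shift] at h_lower h_upper
  rw [← Int.sub_mul_emod_self_left (w i - x i) k ((z i - x i) / k),
    Int.emod_eq_of_lt h_lower h_upper]
  linarith

theorem sum_tileCorner (hk : 0 < k) (g : Zd d → ℝ) (z : Zd d) :
    ∑ x ∈ latticeBox 0 (k : Zd d), g (tileCorner k x z) =
      ∑ w ∈ latticeBox 0 (k : Zd d), g (z - w) := by
  have h_range (x : Zd d) : (fun i => (z i - x i) % (k : ℤ)) ∈ latticeBox 0 (k : Zd d) :=
    mem_latticeBox.2 fun i => ⟨Int.emod_nonneg _ (by lia), Int.emod_lt_of_pos _ (by lia)⟩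
  have h_involutive (x : Zd d) (hx : x ∈ latticeBox 0 (k : Zd d)) :
      (fun i => (z i - (z i - x i) % (k : ℤ)) % (k : ℤ)) = x := by
    funext i
    rw [Int.sub_emod_emod, sub_sub_cancel]
    exact Int.emod_eq_of_lt (mem_latticeBox.1 hx i).1 (mem_latticeBox.1 hx i).2
  exact Finset.sum_nbij' (fun x i => (z i - x i) % (k : ℤ)) (fun w i => (z i - w i) % (k : ℤ))
    (fun x _ => h_range x) (fun w _ => h_range w) h_involutive h_involutive fun _ _ => rfl

theorem sum_ite_sub_mem_latticeBox {L M w : Zd d} (hw : w ∈ latticeBox 0 (k : Zd d))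
    (T : Zd d → Zd d → ℝ) :
    ∑ z ∈ latticeBox L M, (if z - w ∈ latticeBox L (M - k) then T (z - w) z else 0) =
      ∑ y ∈ latticeBox L (M - k), T y (y + w) := by
  rw [← Finset.sum_filter]
  refine Finset.sum_nbij' (· - w) (· + w) (fun z hz => (Finset.mem_filter.1 hz).2)
    (fun y hy => ?_) (fun z _ => sub_add_cancel z w) (fun y _ => add_sub_cancel_right y w)
    fun z _ => by rw [sub_add_cancel]
  rw [Finset.mem_filter, add_sub_cancel_right]
  refine ⟨mem_latticeBox.2 fun i => ?_, hy⟩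
  have h_y := mem_latticeBox.1 hy i
  have h_w := mem_latticeBox.1 hw i
  simp only [Pi.sub_apply, Pi.zero_apply, Pi.natCast_apply, Pi.add_apply] at h_y h_w ⊢
  lia

theorem sum_ite_sub_notMem_latticeBox_le {L M w : Zd d} (hw : w ∈ latticeBox 0 (k : Zd d))
    {h : Zd d → ℝ} (h_nonneg : ∀ z, 0 ≤ h z) :
    ∑ z ∈ latticeBox L M, (if z - w ∈ latticeBox L (M - k) then 0 else h z) ≤
      ∑ z ∈ latticeBox L M, h z - ∑ z ∈ latticeBox (L + (k : Zd d)) (M - k), h z := by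
  have h_subset : latticeBox (L + (k : Zd d)) (M - k) ⊆ latticeBox L M := fun z hz =>
    mem_latticeBox.2 fun i => by
      have h_z := mem_latticeBox.1 hz i
      simp only [Pi.add_apply, Pi.sub_apply, Pi.natCast_apply] at h_z
      lia
  have h_sub_mem (z : Zd d) (hz : z ∈ latticeBox (L + (k : Zd d)) (M - k)) :
      z - w ∈ latticeBox L (M - k) :=
    mem_latticeBox.2 fun i => by
      have h_z := mem_latticeBox.1 hz i
      have h_w := mem_latticeBox.1 hw i
      simp only [Pi.add_apply, Pi.sub_apply, Pi.natCast_apply, Pi.zero_apply] at h_z h_w ⊢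
      lia
  rw [← Finset.sum_sdiff_eq_sub h_subset, ← Finset.sum_sdiff h_subset,
    Finset.sum_eq_zero (s := latticeBox (L + (k : Zd d)) (M - k)) fun z hz =>
      if_pos (h_sub_mem z hz), add_zero]
  refine Finset.sum_le_sum fun z _ => ?_
  split_ifs
  exacts [h_nonneg z, le_rfl]

theorem card_latticeBox_zero_natCast (k : ℕ) :
    ((latticeBox 0 (k : Zd d)).card : ℝ) = (k : ℝ) ^ d := by
  simp only [card_latticeBox, Pi.natCast_apply, Int.cast_natCast, Pi.zero_apply, Int.cast_zero,
    sub_zero, Nat.cast_nonneg, max_eq_left, Finset.prod_const, Finset.card_univ, Fintype.card_fin]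

theorem sum_sum_tileCorner (hk : 0 < k) (L M : Zd d) (T : Zd d → Zd d → ℝ) (h : Zd d → ℝ) :
    ∑ x ∈ latticeBox 0 (k : Zd d), ∑ z ∈ latticeBox L M,
        (if tileCorner k x z ∈ latticeBox L (M - k) then T (tileCorner k x z) z else h z) =
      ∑ y ∈ latticeBox L (M - k), ∑ w ∈ latticeBox 0 (k : Zd d), T y (y + w) +
        ∑ w ∈ latticeBox 0 (k : Zd d), ∑ z ∈ latticeBox L M,
          (if z - w ∈ latticeBox L (M - k) then 0 else h z) := by
  rw [Finset.sum_comm (s := latticeBox L (M - k)), ← Finset.sum_add_distrib, Finset.sum_comm]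
  simp_rw [fun z => sum_tileCorner hk
    (fun y => if y ∈ latticeBox L (M - k) then T y z else h z) z]
  rw [Finset.sum_comm]
  refine Finset.sum_congr rfl fun w hw => ?_
  rw [← sum_ite_sub_mem_latticeBox hw, ← Finset.sum_add_distrib]
  refine Finset.sum_congr rfl fun z _ => ?_
  split_ifs
  exacts [(add_zero _).symm, (zero_add _).symm]

end Tiling

/-- The field equal to the translate of the corrector `Φ y` on the tile with corner `y` for
`y ∈ I`, and vanishing on all other tiles. -/
def tiledCorrector (k : ℕ) (I : Finset (Zd d)) (Φ : Zd d → Zd d → Rn n) (x z : Zd d) : Rn n :=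
  if tileCorner k x z ∈ I then Φ (tileCorner k x z) (z - tileCorner k x z) else 0

section TiledCorrector

variable {E0 : Finset (Zd d)} {k : ℕ} {Φ : Zd d → Zd d → Rn n}

theorem tiledCorrector_add (hΦ : ∀ y, Φ y ∈ correctorSpace n E0 1 (cube d k))
    (I : Finset (Zd d)) (x z : Zd d) {b : Zd d} (hb : b ∈ E0) :
    tiledCorrector k I Φ x (z + b) =
      if tileCorner k x z ∈ I then Φ (tileCorner k x z) (z + b - tileCorner k x z) else 0 := by
  by_cases h_same : tileCorner k x (z + b) = tileCorner k x z
  · rw [tiledCorrector, h_same]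
  have h_zero : Φ (tileCorner k x z) (z + b - tileCorner k x z) = 0 :=
    eq_zero_of_notMem_latticeBox (hΦ _) fun h => h_same (tileCorner_eq_of_sub_mem h)
  have h_zero' : Φ (tileCorner k x (z + b)) (z + b - tileCorner k x (z + b)) = 0 := by
    rw [add_sub_right_comm]
    exact add_eq_zero_of_notMem_latticeBox (hΦ _) hb fun h =>
      h_same (tileCorner_eq_of_sub_mem h).symm
  rw [tiledCorrector, h_zero, h_zero', ite_self, ite_self]

theorem siteEnergy_tiledCorrector
    (hΦ : ∀ y, Φ y ∈ correctorSpace n E0 1 (cube d k)) (I : Finset (Zd d))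
    (v : Zd d → Zd d → Rn n → ℝ) (F : Rd d →L[ℝ] Rn n) (x z : Zd d) :
    siteEnergy E0 v F (tiledCorrector k I Φ x) z =
      if tileCorner k x z ∈ I then
        siteEnergy E0 v F (fun w => Φ (tileCorner k x z) (w - tileCorner k x z)) z
      else siteEnergy E0 v F 0 z := by
  split_ifs with h <;>
    refine siteEnergy_congr ?_ fun b hb => (tiledCorrector_add hΦ I x z hb).trans ?_
  exacts [if_pos h, if_pos h, if_neg h, if_neg h]

/-- Averaging over the `k ^ d` positions of the tiling replaces the sum over the tiles of one
tiling by a sum over all lattice translates of the cell, to which the ergodic theorem applies. -/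
theorem exists_sum_siteEnergy_tiledCorrector_le (hk : 0 < k)
    (hΦ : ∀ y, Φ y ∈ correctorSpace n E0 1 (cube d k)) {v : Zd d → Zd d → Rn n → ℝ}
    (hv : ∀ z, ∀ b ∈ E0, ∀ r, 0 ≤ v z b r) (F : Rd d →L[ℝ] Rn n) (L M : Zd d) :
    ∃ x, ∑ z ∈ latticeBox L M, siteEnergy E0 v F (tiledCorrector k (latticeBox L (M - k)) Φ x) z ≤
      ((k : ℝ) ^ d)⁻¹ * ∑ y ∈ latticeBox L (M - k), cellEnergy E0 (fun z => v (z + y)) F k (Φ y) +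
        (∑ z ∈ latticeBox L M, siteEnergy E0 v F 0 z -
          ∑ z ∈ latticeBox (L + (k : Zd d)) (M - k), siteEnergy E0 v F 0 z) := by
  have hk_pow : (0 : ℝ) < (k : ℝ) ^ d := by positivity
  have h_nonempty : (latticeBox 0 (k : Zd d)).Nonempty :=
    ⟨0, mem_latticeBox.2 fun _ => ⟨le_rfl, Nat.cast_pos.2 hk⟩⟩
  refine (Finset.exists_le_of_sum_le h_nonempty ?_).imp fun x hx => hx.2
  simp_rw [siteEnergy_tiledCorrector hΦ]
  rw [sum_sum_tileCorner hk L M fun y z => siteEnergy E0 v F (fun w => Φ y (w - y)) z,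
    Finset.sum_const, nsmul_eq_mul, card_latticeBox_zero_natCast, mul_add,
    mul_inv_cancel_left₀ hk_pow.ne', ← card_latticeBox_zero_natCast, ← nsmul_eq_mul]
  refine add_le_add (le_of_eq ?_) (Finset.sum_le_card_nsmul _ _ _ fun w hw =>
    sum_ite_sub_notMem_latticeBox_le hw fun z => siteEnergy_nonneg hv F 0 z)
  refine Finset.sum_congr rfl fun y _ => Finset.sum_congr rfl fun w _ => ?_
  rw [add_comm y w, siteEnergy_translate]

theorem norm_tiledCorrector_le {B : ℝ} (hB : 0 ≤ B) (hΦB : ∀ y z, ‖Φ y z‖ ≤ B)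
    (I : Finset (Zd d)) (x z : Zd d) : ‖tiledCorrector k I Φ x z‖ ≤ B := by
  rw [tiledCorrector]
  split_ifs
  exacts [hΦB _ _, norm_zero.trans_le hB]

end TiledCorrector

section BoundaryValues

variable {E0 : Finset (Zd d)} {k : ℕ} {ε : ℝ} {a b : Fin d → ℝ}

theorem notMem_cube_of_notMem_halfBox (hε : 0 < ε) {y : Zd d}
    (hy : y ∈ latticeBox (rescaledCorner a ε) (rescaledCorner b ε - k)) {x : Rd d}
    (hx : x ∉ halfBox a b) : ε⁻¹ • x - toRd y ∉ cube d k := by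
  refine fun h_cube => hx fun i => ?_
  obtain ⟨h_lower, h_upper⟩ := h_cube i
  obtain ⟨hy_lower, hy_upper⟩ := mem_latticeBox.1 hy i
  have h_apply : (ε⁻¹ • x - toRd y) i = x i / ε - y i := by
    rw [div_eq_inv_mul]
    rfl
  have h_a : a i / ε ≤ y i := Int.ceil_le.1 hy_lower
  have h_b : ((y i + k : ℤ) : ℝ) < b i / ε := by
    refine Int.lt_ceil.1 ?_
    simp only [Pi.sub_apply, Pi.natCast_apply, rescaledCorner] at hy_upper
    linarith
  rw [h_apply] at h_lower h_upper
  push_cast at h_b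
  exact ⟨(div_le_div_iff_of_pos_right hε).1 (by linarith),
    (div_lt_div_iff_of_pos_right hε).1 (by linarith)⟩

theorem mul_infDist_cube_le (hε : 0 < ε) {y : Zd d}
    (hy : y ∈ latticeBox (rescaledCorner a ε) (rescaledCorner b ε - k)) (z : Zd d) :
    ε * infDist (toRd (z - y)) (cube d k)ᶜ ≤ infDist (ε • toRd z) (halfBox a b)ᶜ := by
  rcases (cube d k)ᶜ.eq_empty_or_nonempty with h_empty | ⟨x₀, hx₀⟩
  · rw [h_empty, infDist_empty, mul_zero]
    exact infDist_nonneg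
  have h_nonempty : (halfBox a b)ᶜ.Nonempty :=
    ⟨WithLp.toLp 2 b, fun h => hx₀ fun i => absurd (h i).2 (lt_irrefl _)⟩
  refine (le_infDist h_nonempty).2 fun x hx => ?_
  calc ε * infDist (toRd (z - y)) (cube d k)ᶜ
      ≤ ε * dist (toRd (z - y)) (ε⁻¹ • x - toRd y) := mul_le_mul_of_nonneg_left
        (infDist_le_dist_of_mem (notMem_cube_of_notMem_halfBox hε hy hx)) hε.le
    _ = dist (ε • toRd z) x := by
        rw [toRd_sub, dist_sub_right]
        nth_rw 1 [← Real.norm_of_nonneg hε.le]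
        rw [← dist_smul₀, smul_inv_smul₀ hε.ne']

theorem tiledCorrector_mem_correctorSpace (hε : 0 < ε) {Φ : Zd d → Zd d → Rn n}
    (hΦ : ∀ y, Φ y ∈ correctorSpace n E0 1 (cube d k)) (x : Zd d) :
    tiledCorrector k (latticeBox (rescaledCorner a ε) (rescaledCorner b ε - k)) Φ x ∈
      correctorSpace n E0 ε (halfBox a b) := by
  intro z hz
  rw [tiledCorrector]
  split_ifs with h_mem
  · exact mem_correctorSpace_one.1 (hΦ _) _ <|
      le_of_mul_le_mul_left ((mul_infDist_cube_le hε h_mem z).trans hz) hε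
  · rfl

end BoundaryValues

/-! ### Finitely many correctors -/

theorem integrable_inf' {ι : Type*} {P : Measure Ω} {e : ι → Ω → ℝ}
    (he : ∀ x, Integrable (e x) P) (s : Finset ι) (hs : s.Nonempty) :
    Integrable (fun ω => s.inf' hs fun x => e x ω) P := by
  simp_rw [← Finset.inf'_apply]
  exact Finset.inf'_induction hs e (p := fun f => Integrable f P) (fun _ hf _ hg => hf.inf hg)
    fun x _ => he x

theorem tendsto_inf'_image_of_denseRange {X : Type*} [TopologicalSpace X] [Nonempty X]
    {g : X → ℝ} (hg : Continuous g) (hg_bdd : BddBelow (range g)) {x : ℕ → X}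
    (hx : DenseRange x) :
    Tendsto (fun j : ℕ => ((Finset.range (j + 1)).image x).inf' (by simp) g) atTop
      (𝓝 (⨅ y, g y)) := by
  refine tendsto_order.2 ⟨fun c hc => ?_, fun c hc => ?_⟩
  · exact Eventually.of_forall fun j => (Finset.lt_inf'_iff _).2 fun y _ =>
      hc.trans_le (ciInf_le hg_bdd y)
  · obtain ⟨i, hi⟩ := hx.exists_mem_open (isOpen_lt hg continuous_const) (exists_lt_of_ciInf_lt hc)
    filter_upwards [eventually_ge_atTop i] with j hj
    exact (Finset.inf'_le _ (Finset.mem_image_of_mem x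
      (Finset.mem_range.2 (Nat.lt_succ_of_le hj)))).trans_lt hi

theorem exists_finset_integral_inf'_lt {X : Type*} [TopologicalSpace X]
    [TopologicalSpace.SeparableSpace X] [Nonempty X] {P : Measure Ω} {e : X → Ω → ℝ}
    (he_cont : ∀ ω, Continuous fun x => e x ω) (he_int : ∀ x, Integrable (e x) P)
    (he_nonneg : ∀ x ω, 0 ≤ e x ω) {δ : ℝ} (hδ : ∫ ω, ⨅ x, e x ω ∂P < δ) :
    ∃ (s : Finset X) (hs : s.Nonempty), ∫ ω, s.inf' hs (fun x => e x ω) ∂P < δ := by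
  set x := TopologicalSpace.denseSeq X
  have h_tendsto : Tendsto
      (fun j : ℕ => ∫ ω, ((Finset.range (j + 1)).image x).inf' (by simp) (fun y => e y ω) ∂P)
      atTop (𝓝 (∫ ω, ⨅ y, e y ω ∂P)) := by
    refine tendsto_integral_of_dominated_convergence (e (x 0))
      (fun j => (integrable_inf' he_int _ _).aestronglyMeasurable) (he_int (x 0))
      (fun j => Eventually.of_forall fun ω => ?_)
      (Eventually.of_forall fun ω => tendsto_inf'_image_of_denseRange (he_cont ω)
        ⟨0, forall_mem_range.2 fun y => he_nonneg y ω⟩ (TopologicalSpace.denseRange_denseSeq X))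
    rw [Real.norm_of_nonneg (Finset.le_inf' _ _ fun y _ => he_nonneg y ω)]
    exact Finset.inf'_le _ (Finset.mem_image_of_mem x (Finset.mem_range.2 j.succ_pos))
  obtain ⟨j, hj⟩ := (h_tendsto.eventually_lt_const hδ).exists
  exact ⟨_, _, hj⟩

section HomogenizedEnergy

variable {P : Measure Ω} {τ : Zd d → Ω → Ω} {E0 : Finset (Zd d)} {V : Zd d → Ω → Rn n → ℝ}

theorem integrable_siteEnergy (hτ : ∀ z, MeasurePreserving (τ z) P P)
    (hV : ∀ b ∈ E0, ∀ r, Integrable (fun ω => V b ω r) P) (F : Rd d →L[ℝ] Rn n)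
    (φ : Zd d → Rn n) (z : Zd d) :
    Integrable (fun ω => siteEnergy E0 (environment τ V ω) F φ z) P :=
  integrable_finsetSum _ fun b hb => (hτ z).integrable_comp_of_integrable (hV b hb _)

theorem integrable_cellEnergy (hτ : ∀ z, MeasurePreserving (τ z) P P)
    (hV : ∀ b ∈ E0, ∀ r, Integrable (fun ω => V b ω r) P) (F : Rd d →L[ℝ] Rn n) (k : ℕ)
    (φ : Zd d → Rn n) : Integrable (fun ω => cellEnergy E0 (environment τ V ω) F k φ) P :=
  integrable_finsetSum _ fun z _ => integrable_siteEnergy hτ hV F φ z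

theorem W0_le_integral_siteEnergy (hτ : ∀ z, MeasurePreserving (τ z) P P)
    (hV_nonneg : ∀ b ∈ E0, ∀ ω r, 0 ≤ V b ω r)
    (hV : ∀ b ∈ E0, ∀ r, Integrable (fun ω => V b ω r) P) (F : Rd d →L[ℝ] Rn n) :
    W0 P τ E0 V F ≤ ∫ ω, siteEnergy E0 (environment τ V ω) F 0 0 ∂P := by
  have h_bdd : BddBelow (range fun k : {k : ℕ // 0 < k} =>
      (((k : ℕ) : ℝ) ^ d)⁻¹ * ∫ ω, mF τ E0 V ω F (cube d k) ∂P) :=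
    ⟨0, forall_mem_range.2 fun k =>
      mul_nonneg (by positivity) (integral_nonneg fun ω => mF_cube_nonneg τ E0 ω F hV_nonneg k)⟩
  calc W0 P τ E0 V F ≤ (((1 : ℕ) : ℝ) ^ d)⁻¹ * ∫ ω, mF τ E0 V ω F (cube d 1) ∂P :=
        ciInf_le h_bdd ⟨1, one_pos⟩
    _ = ∫ ω, mF τ E0 V ω F (cube d 1) ∂P := by rw [Nat.cast_one, one_pow, inv_one, one_mul]
    _ ≤ ∫ ω, siteEnergy E0 (environment τ V ω) F 0 0 ∂P :=
        integral_mono_of_nonneg (Eventually.of_forall fun ω => mF_cube_nonneg τ E0 ω F hV_nonneg 1)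
          (integrable_siteEnergy hτ hV F 0 0)
          (Eventually.of_forall fun ω => mF_cube_one_le τ E0 ω F hV_nonneg)

theorem exists_finset_integral_cellEnergy_lt (hτ : ∀ z, MeasurePreserving (τ z) P P)
    (hV_cont : ∀ b ∈ E0, ∀ ω, Continuous (V b ω)) (hV_nonneg : ∀ b ∈ E0, ∀ ω r, 0 ≤ V b ω r)
    (hV : ∀ b ∈ E0, ∀ r, Integrable (fun ω => V b ω r) P) (F : Rd d →L[ℝ] Rn n) {W : ℝ}
    (hW : W0 P τ E0 V F < W) :
    ∃ k > 0, ∃ (S : Finset (correctorSpace n E0 1 (cube d k))) (hS : S.Nonempty),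
      ((k : ℝ) ^ d)⁻¹ *
        ∫ ω, S.inf' hS (fun φ => cellEnergy E0 (environment τ V ω) F k φ) ∂P < W := by
  have h_index : Nonempty {k : ℕ // 0 < k} := ⟨⟨1, one_pos⟩⟩
  obtain ⟨⟨k, hk⟩, h_lt⟩ := exists_lt_of_ciInf_lt hW
  have hk_pow : (0 : ℝ) < (k : ℝ) ^ d := by positivity
  rw [inv_mul_lt_iff₀ hk_pow] at h_lt
  simp only [mF_cube] at h_lt
  have h_countable : SecondCountableTopology (correctorSpace n E0 1 (cube d k)) :=
    Topology.IsEmbedding.subtypeVal.secondCountableTopology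
  obtain ⟨S, hS, h_inf⟩ := exists_finset_integral_inf'_lt
    (X := correctorSpace n E0 1 (cube d k))
    (e := fun φ ω => cellEnergy E0 (environment τ V ω) F k φ)
    (fun ω => (continuous_cellEnergy (fun z b hb => hV_cont b hb (τ z ω)) F k).comp
      continuous_subtype_val)
    (fun φ => integrable_cellEnergy hτ hV F k φ)
    (fun φ ω => cellEnergy_nonneg (fun z b hb => hV_nonneg b hb (τ z ω)) F k φ) h_lt
  exact ⟨k, hk, S, hS, (inv_mul_lt_iff₀ hk_pow).2 h_inf⟩

end HomogenizedEnergy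

/-! ### Recovery fields -/

theorem exists_tendsto_of_eventually_exists_dist_lt {ι X Y : Type*} [PseudoMetricSpace Y]
    {l : Filter ι} {r : ι → ℝ} (hr_pos : ∀ᶠ i in l, 0 < r i) (hr : Tendsto r l (𝓝 0))
    {S : ι → Set X} (hS : ∀ i, (S i).Nonempty) {g : ι → X → Y} {y : Y}
    (h : ∀ δ > 0, ∀ᶠ i in l, ∃ x ∈ S i, dist (g i x) y < δ) :
    ∃ x : ι → X, (∀ i, x i ∈ S i) ∧ Tendsto (fun i => g i (x i)) l (𝓝 y) := by
  have h_near (i : ι) : ∃ x ∈ S i, 0 < r i → dist (g i x) y < infDist y (g i '' S i) + r i := by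
    by_cases hi : 0 < r i
    · obtain ⟨_, ⟨x, hx, rfl⟩, h_dist⟩ :=
        (infDist_lt_iff ((hS i).image (g i))).1 (lt_add_of_pos_right (infDist y (g i '' S i)) hi)
      exact ⟨x, hx, fun _ => by rwa [dist_comm]⟩
    · exact (hS i).imp fun x hx => ⟨hx, fun h_pos => absurd h_pos hi⟩
  choose x hx_mem hx_near using h_near
  refine ⟨x, hx_mem, Metric.tendsto_nhds.2 fun δ hδ => ?_⟩
  filter_upwards [h (δ / 2) (half_pos hδ), hr.eventually_lt_const (half_pos hδ), hr_pos]
    with i ⟨z, hz, hz_dist⟩ hr_lt hr_i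
  calc dist (g i (x i)) y < infDist y (g i '' S i) + r i := hx_near i hr_i
    _ ≤ dist (g i z) y + r i := by
        rw [dist_comm]
        exact add_le_add_left (infDist_le_dist_of_mem (mem_image_of_mem _ hz)) _
    _ < δ := by linarith

theorem exists_abs_sub_lt_of_isPreconnected {X : Type*} [TopologicalSpace X] {s : Set X}
    (hs : IsPreconnected s) {f : X → ℝ} (hf : Continuous f) {x y : X} (hx : x ∈ s) (hy : y ∈ s)
    {t η : ℝ} (hη : 0 < η) (h_lower : t - η < f x) (h_upper : f y < t + η) :
    ∃ z ∈ s, |f z - t| < η := by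
  have h_cover : s ⊆ {z | t - η < f z} ∪ {z | f z < t + η} := fun z _ =>
    (lt_or_ge (t - η) (f z)).imp_right fun h => h.trans_lt (by linarith)
  obtain ⟨z, hz, hz_lower, hz_upper⟩ := hs _ _ (isOpen_lt continuous_const hf)
    (isOpen_lt hf continuous_const) h_cover ⟨x, hx, h_lower⟩ ⟨y, hy, h_upper⟩
  exact ⟨z, hz, abs_sub_lt_iff.2 ⟨sub_lt_iff_lt_add'.2 hz_upper, sub_lt_comm.1 hz_lower⟩⟩

theorem rescaledMoment_nonneg (s : ℝ) (a b : Fin d → ℝ) {ε : ℝ} (hε : 0 ≤ ε) (φ : Zd d → Rn n) :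
    0 ≤ rescaledMoment s a b ε φ := by
  unfold rescaledMoment
  positivity

theorem eventually_rescaledMoment_lt {s : ℝ} (hs : 0 < s) (a b : Fin d → ℝ) (B : ℝ) {δ : ℝ}
    (hδ : 0 < δ) : ∀ᶠ ε in 𝓝[>] (0 : ℝ), ∀ φ : Zd d → Rn n, (∀ z, ‖φ z‖ ≤ B) →
      rescaledMoment s a b ε φ < δ := by
  have h_rpow : Tendsto (fun ε : ℝ => (ε * B) ^ s) (𝓝[>] 0) (𝓝 0) := by
    have h_cont : Continuous fun ε : ℝ => (ε * B) ^ s :=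
      (continuous_id.mul continuous_const).rpow_const fun _ => Or.inr hs.le
    have h_tendsto := (h_cont.tendsto 0).mono_left (nhdsWithin_le_nhds (s := Ioi 0))
    rwa [zero_mul, Real.zero_rpow hs.ne'] at h_tendsto
  have h_bound := ((rescaledTendsto_rescaledCorner a).tendsto_card
    (rescaledTendsto_rescaledCorner b)).mul h_rpow
  rw [mul_zero] at h_bound
  filter_upwards [h_bound.eventually_lt_const hδ, self_mem_nhdsWithin] with ε h_lt hε φ hφ
  refine lt_of_le_of_lt ?_ h_lt
  rw [rescaledMoment, mul_assoc, ← nsmul_eq_mul]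
  refine mul_le_mul_of_nonneg_left (Finset.sum_le_card_nsmul _ _ _ fun z _ => ?_)
    (pow_nonneg (le_of_lt hε) d)
  rw [norm_smul, Real.norm_of_nonneg (le_of_lt hε)]
  exact Real.rpow_le_rpow (mul_nonneg (le_of_lt hε) (norm_nonneg _))
    (mul_le_mul_of_nonneg_left (hφ z) (le_of_lt hε)) hs.le

/-- In the environment `v`, the energy density `W` at the slope `F` is at most that of the affine
field, and is reached up to any `δ > 0` by choosing in each translate of a cell the best of
finitely many correctors. -/
structure IsApproximableByCells (E0 : Finset (Zd d)) (v : Zd d → Zd d → Rn n → ℝ)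
    (F : Rd d →L[ℝ] Rn n) (W : ℝ) : Prop where
  exists_affine : ∃ m ≥ W, HasBoxAverage (siteEnergy E0 v F 0) m
  exists_cells : ∀ W' > W, ∃ k > 0, ∃ (S : Finset (correctorSpace n E0 1 (cube d k)))
    (hS : S.Nonempty) (m : ℝ), ((k : ℝ) ^ d)⁻¹ * m < W' ∧
      HasBoxAverage (fun y => S.inf' hS fun φ => cellEnergy E0 (fun z => v (z + y)) F k φ) m

section Recovery

variable {E0 : Finset (Zd d)} {v : Zd d → Zd d → Rn n → ℝ} {F : Rd d →L[ℝ] Rn n}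

theorem HasBoxAverage.tendsto_rescaledEnergy_zero {m : ℝ}
    (h : HasBoxAverage (siteEnergy E0 v F 0) m) (a b : Fin d → ℝ) :
    Tendsto (fun ε => rescaledEnergy E0 v F a b ε 0) (𝓝[>] 0)
      (𝓝 (volume.real (halfBox a b) * m)) :=
  h (rescaledTendsto_rescaledCorner a) (rescaledTendsto_rescaledCorner b)

theorem eventually_exists_rescaledEnergy_lt {k : ℕ} (hk : 0 < k)
    (hv : ∀ z, ∀ b ∈ E0, ∀ r, 0 ≤ v z b r) {S : Finset (correctorSpace n E0 1 (cube d k))}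
    (hS : S.Nonempty) {m₀ m : ℝ} (h_affine : HasBoxAverage (siteEnergy E0 v F 0) m₀)
    (h_cell : HasBoxAverage
      (fun y => S.inf' hS fun φ => cellEnergy E0 (fun z => v (z + y)) F k φ) m)
    (a b : Fin d → ℝ) {t : ℝ} (ht : volume.real (halfBox a b) * (((k : ℝ) ^ d)⁻¹ * m) < t) :
    ∃ B, ∀ᶠ ε in 𝓝[>] (0 : ℝ), ∃ φ ∈ correctorSpace n E0 ε (halfBox a b),
      (∀ z, ‖φ z‖ ≤ B) ∧ rescaledEnergy E0 v F a b ε φ < t := by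
  choose Φ hΦS hΦ using fun y => Finset.exists_mem_eq_inf' hS
    fun φ : correctorSpace n E0 1 (cube d k) => cellEnergy E0 (fun z => v (z + y)) F k φ
  have h_bound (y z : Zd d) :
      ‖(Φ y : Zd d → Rn n) z‖ ≤ ∑ φ ∈ S, ∑ w ∈ latticeBox 0 (k : Zd d), ‖(φ : Zd d → Rn n) w‖ :=
    (norm_le_sum_of_mem_correctorSpace (Φ y).2 z).trans <| Finset.single_le_sum
      (f := fun φ : correctorSpace n E0 1 (cube d k) =>
        ∑ w ∈ latticeBox 0 (k : Zd d), ‖(φ : Zd d → Rn n) w‖)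
      (fun φ _ => Finset.sum_nonneg fun w _ => norm_nonneg _) (hΦS y)
  have ha := rescaledTendsto_rescaledCorner a
  have hb := rescaledTendsto_rescaledCorner b
  have hb_sub : RescaledTendsto (fun ε => rescaledCorner b ε - (k : Zd d)) b := by
    simpa only [sub_eq_add_neg] using hb.add_const (-(k : Zd d))
  have h_limit := ((h_cell ha hb_sub).const_mul ((k : ℝ) ^ d)⁻¹).add
    ((h_affine ha hb).sub (h_affine (ha.add_const k) hb_sub))
  rw [sub_self, add_zero, mul_left_comm] at h_limit
  refine ⟨∑ φ ∈ S, ∑ w ∈ latticeBox 0 (k : Zd d), ‖(φ : Zd d → Rn n) w‖, ?_⟩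
  filter_upwards [h_limit.eventually_lt_const ht, self_mem_nhdsWithin] with ε h_lt hε
  obtain ⟨x, hx⟩ := exists_sum_siteEnergy_tiledCorrector_le hk (fun y => (Φ y).2) hv F
    (rescaledCorner a ε) (rescaledCorner b ε)
  refine ⟨_, tiledCorrector_mem_correctorSpace hε (fun y => (Φ y).2) x,
    norm_tiledCorrector_le ((norm_nonneg _).trans (h_bound 0 0)) h_bound _ x, ?_⟩
  refine (mul_le_mul_of_nonneg_left hx (pow_nonneg (le_of_lt hε) d)).trans_lt ?_
  simp_rw [hΦ] at h_lt
  linarith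

theorem eventually_exists_rescaledEnergy_near {s : ℝ} (hs : 0 < s)
    (hv : ∀ z, ∀ b ∈ E0, ∀ r, 0 ≤ v z b r) (hv_cont : ∀ z, ∀ b ∈ E0, Continuous (v z b))
    {W : ℝ} (h : IsApproximableByCells E0 v F W) (a b : Fin d → ℝ) {δ : ℝ} (hδ : 0 < δ) :
    ∀ᶠ ε in 𝓝[>] (0 : ℝ), ∃ φ ∈ correctorSpace n E0 ε (halfBox a b),
      rescaledMoment s a b ε φ < δ ∧
        |rescaledEnergy E0 v F a b ε φ - volume.real (halfBox a b) * W| < δ := by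
  set vol := volume.real (halfBox a b)
  have h_vol : 0 ≤ vol := measureReal_nonneg
  obtain ⟨m₀, hW, h_affine⟩ := h.exists_affine
  obtain ⟨k, hk, S, hS, m, hm, h_cell⟩ := h.exists_cells (W + δ / (vol + 1))
    (lt_add_of_pos_right W (by positivity))
  have h_upper : vol * (((k : ℝ) ^ d)⁻¹ * m) < vol * W + δ := by
    calc vol * (((k : ℝ) ^ d)⁻¹ * m) ≤ vol * (W + δ / (vol + 1)) :=
          mul_le_mul_of_nonneg_left hm.le h_vol
      _ = vol * W + δ * (vol / (vol + 1)) := by ring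
      _ < vol * W + δ := add_lt_add_right
          (mul_lt_of_lt_one_right hδ ((div_lt_one (by positivity)).2 (lt_add_one vol))) _
  have h_lower : vol * W - δ < vol * m₀ :=
    (sub_lt_self _ hδ).trans_le (mul_le_mul_of_nonneg_left hW h_vol)
  obtain ⟨B, hB⟩ := eventually_exists_rescaledEnergy_lt hk hv hS h_affine h_cell a b h_upper
  filter_upwards [hB, (h_affine.tendsto_rescaledEnergy_zero a b).eventually_const_lt h_lower,
    eventually_rescaledMoment_lt (n := n) hs a b B hδ] with ε ⟨φ, hφ, hφB, hφ_lt⟩ h_zero h_moment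
  obtain ⟨t, ht, ht_near⟩ := exists_abs_sub_lt_of_isPreconnected isPreconnected_Icc
    (f := fun t : ℝ => rescaledEnergy E0 v F a b ε (t • φ))
    ((continuous_rescaledEnergy hv_cont F a b ε).comp (by fun_prop))
    (left_mem_Icc.2 zero_le_one) (right_mem_Icc.2 zero_le_one) hδ
    (by rwa [zero_smul]) (by rwa [one_smul])
  refine ⟨t • φ, Submodule.smul_mem _ t hφ, h_moment _ fun z => ?_, ht_near⟩
  calc ‖t • φ z‖ = t * ‖φ z‖ := by rw [norm_smul, Real.norm_of_nonneg ht.1]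
    _ ≤ B := (mul_le_of_le_one_left (norm_nonneg _) ht.2).trans (hφB z)

theorem exists_recovery_field {s : ℝ} (hs : 0 < s)
    (hv : ∀ z, ∀ b ∈ E0, ∀ r, 0 ≤ v z b r) (hv_cont : ∀ z, ∀ b ∈ E0, Continuous (v z b))
    {W : ℝ} (h : IsApproximableByCells E0 v F W) (a b : Fin d → ℝ) :
    ∃ φ : ℝ → Zd d → Rn n, (∀ ε, φ ε ∈ correctorSpace n E0 ε (halfBox a b)) ∧
      Tendsto (fun ε => rescaledMoment s a b ε (φ ε)) (𝓝[>] 0) (𝓝 0) ∧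
      Tendsto (fun ε => rescaledEnergy E0 v F a b ε (φ ε)) (𝓝[>] 0)
        (𝓝 (volume.real (halfBox a b) * W)) := by
  obtain ⟨φ, hφ, h_tendsto⟩ := exists_tendsto_of_eventually_exists_dist_lt
    (S := fun ε => (correctorSpace n E0 ε (halfBox a b) : Set (Zd d → Rn n)))
    (g := fun ε φ => (rescaledMoment s a b ε φ, rescaledEnergy E0 v F a b ε φ))
    (y := (0, volume.real (halfBox a b) * W))
    (r := fun ε => ε) self_mem_nhdsWithin (tendsto_nhdsWithin_of_tendsto_nhds tendsto_id)
    (fun _ => ⟨0, zero_mem _⟩)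
    fun δ hδ => by
      filter_upwards [self_mem_nhdsWithin,
        eventually_exists_rescaledEnergy_near hs hv hv_cont h a b hδ]
        with ε hε ⟨φ, hφ, h_moment, h_energy⟩
      refine ⟨φ, hφ, max_lt ?_ h_energy⟩
      rwa [Real.dist_0_eq_abs, abs_of_nonneg (rescaledMoment_nonneg s a b (le_of_lt hε) φ)]
  exact ⟨φ, hφ, (Prod.tendsto_iff _ _).1 h_tendsto⟩

end Recovery

/-! ### Stationary ergodic environments -/

section Stationary

variable {P : Measure Ω} [IsProbabilityMeasure P] {τ : Zd d → Ω → Ω}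

theorem ae_hasBoxAverage (hτ_zero : τ 0 = id) (hτ_add : ∀ x y : Zd d, τ (x + y) = τ x ∘ τ y)
    (hτ : ∀ z, MeasurePreserving (τ z) P P)
    (hτ_erg : ∀ B, MeasurableSet B → (∀ z, τ z ⁻¹' B = B) → P B = 0 ∨ P B = 1)
    {f : Ω → ℝ} (hf : Integrable f P) :
    ∀ᵐ ω ∂P, HasBoxAverage (fun z => f (τ z ω)) (∫ ω, f ω ∂P) := by
  let _ : AddAction (Zd d) Ω :=
    { vadd := τ
      zero_vadd := congrFun hτ_zero
      add_vadd := fun x y => congrFun (hτ_add x y) }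
  have : MeasurableConstVAdd (Zd d) Ω := ⟨fun z => (hτ z).measurable⟩
  have : VAddInvariantMeasure (Zd d) Ω P :=
    ⟨fun z _ hB => (hτ z).measure_preimage hB.nullMeasurableSet⟩
  have : ErgodicVAdd (Zd d) Ω P := ergodicVAdd_of_forall_preimage_eq fun B hB h_inv =>
    (hτ_erg B hB h_inv).imp_right (prob_compl_eq_zero_iff hB).2
  exact (pointwise_ergodic_theorem hf).2

theorem ae_isApproximableByCells (hτ_zero : τ 0 = id)
    (hτ_add : ∀ x y : Zd d, τ (x + y) = τ x ∘ τ y) (hτ : ∀ z, MeasurePreserving (τ z) P P)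
    (hτ_erg : ∀ B, MeasurableSet B → (∀ z, τ z ⁻¹' B = B) → P B = 0 ∨ P B = 1)
    {E0 : Finset (Zd d)} {V : Zd d → Ω → Rn n → ℝ}
    (hV_cont : ∀ b ∈ E0, ∀ ω, Continuous (V b ω)) (hV_nonneg : ∀ b ∈ E0, ∀ ω r, 0 ≤ V b ω r)
    (hV : ∀ b ∈ E0, ∀ r, Integrable (fun ω => V b ω r) P) (F : Rd d →L[ℝ] Rn n) :
    ∀ᵐ ω ∂P, IsApproximableByCells E0 (environment τ V ω) F (W0 P τ E0 V F) := by
  have h_exists (m : ℕ) := exists_finset_integral_cellEnergy_lt hτ hV_cont hV_nonneg hV F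
    (lt_add_of_pos_right (W0 P τ E0 V F) (Nat.one_div_pos_of_nat (α := ℝ) (n := m)))
  choose k hk S hS h_lt using h_exists
  have h_cells := ae_all_iff.2 fun m => ae_hasBoxAverage hτ_zero hτ_add hτ hτ_erg
    (integrable_inf' (fun φ : correctorSpace n E0 1 (cube d (k m)) =>
      integrable_cellEnergy hτ hV F (k m) φ) (S m) (hS m))
  filter_upwards [h_cells, ae_hasBoxAverage hτ_zero hτ_add hτ hτ_erg
    (integrable_siteEnergy hτ hV F 0 0)] with ω hω_cells hω_affine
  simp only [environment_translate hτ_add] at hω_cells hω_affine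
  refine ⟨⟨_, W0_le_integral_siteEnergy hτ hV_nonneg hV F, ?_⟩, fun W hW => ?_⟩
  · simp_rw [← siteEnergy_translate, zero_add] at hω_affine
    exact hω_affine
  · obtain ⟨m, hm⟩ := exists_nat_one_div_lt (sub_pos.2 hW)
    exact ⟨k m, hk m, S m, hS m, _, (h_lt m).trans (by linarith), hω_cells m⟩

end Stationary

theorem integrable_of_lintegral_rpow_lt_top {P : Measure Ω} [IsFiniteMeasure P] {f : Ω → ℝ}
    {α : ℝ} (hf : Measurable f) (hf_nonneg : ∀ ω, 0 ≤ f ω) (hα : 1 ≤ α)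
    (h_moment : ∫⁻ ω, ENNReal.ofReal (f ω ^ α) ∂P < ⊤) : Integrable f P := by
  have h_rpow : Integrable (fun ω => ‖f ω‖ ^ α) P := by
    simp_rw [Real.norm_of_nonneg (hf_nonneg _)]
    refine ⟨(hf.pow_const α).aestronglyMeasurable, ?_⟩
    rwa [hasFiniteIntegral_iff_ofReal
      (Eventually.of_forall fun ω => Real.rpow_nonneg (hf_nonneg ω) α)]
  refine (integrable_norm_iff hf.aestronglyMeasurable).1 ?_
  simpa only [Real.rpow_one] using integrable_norm_rpow_of_le hf.aestronglyMeasurable zero_le_one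
    (zero_le_one.trans hα) hα h_rpow

theorem integrable_of_le_mul_one_add {P : Measure Ω} [IsFiniteMeasure P] {f g : Ω → ℝ} {C t : ℝ}
    (hf : Measurable f) (hf_nonneg : ∀ ω, 0 ≤ f ω) (hg : Integrable g P)
    (hfg : ∀ ω, f ω ≤ C * (1 + g ω * t)) : Integrable f P :=
  (((integrable_const (1 : ℝ)).add (hg.mul_const t)).const_mul C).mono' hf.aestronglyMeasurable
    (Eventually.of_forall fun ω => (Real.norm_of_nonneg (hf_nonneg ω)).trans_le (hfg ω))

theorem recovery_affine_bdry_general (P : Measure Ω) [IsProbabilityMeasure P]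
    (τ : Zd d → Ω → Ω) (hτ_zero : τ 0 = id) (hτ_add : ∀ x y : Zd d, τ (x + y) = τ x ∘ τ y)
    (hτ : ∀ z, MeasurePreserving (τ z) P P)
    (hτ_erg : ∀ B, MeasurableSet B → (∀ z, τ z ⁻¹' B = B) → P B = 0 ∨ P B = 1)
    (E0 : Finset (Zd d)) (V : Zd d → Ω → Rn n → ℝ)
    (hV_cont : ∀ b ∈ E0, ∀ ω, Continuous (V b ω)) (hV_nonneg : ∀ b ∈ E0, ∀ ω r, 0 ≤ V b ω r)
    (hV : ∀ b ∈ E0, ∀ r, Integrable (fun ω => V b ω r) P) {s : ℝ} (hs : 0 < s)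
    (F : Rd d →L[ℝ] Rn n) :
    ∃ Ω' : Set Ω, MeasurableSet Ω' ∧ P Ω' = 1 ∧
      ∀ ω ∈ Ω', ∀ c : Rn n, ∀ a b : Fin d → ℝ,
        ∃ u : ℝ → Zd d → Rn n,
          (∀ ε : ℝ, 0 < ε → ∀ z : Zd d,
            infDist (ε • toRd z) (halfBox a b)ᶜ ≤ ε * irange d E0 →
              u ε z = F (ε • toRd z) + c) ∧
          Tendsto (fun ε : ℝ => ε ^ d * ∑' z : Zd d,
              if ε • toRd z ∈ halfBox a b then ‖u ε z - (F (ε • toRd z) + c)‖ ^ s else 0)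
            (𝓝[>] (0 : ℝ)) (𝓝 0) ∧
          Tendsto (fun ε : ℝ => energyE τ E0 V ε ω (u ε) (halfBox a b))
            (𝓝[>] (0 : ℝ)) (𝓝 ((volume (halfBox a b)).toReal * W0 P τ E0 V F)) := by
  obtain ⟨N, hN, hN_meas, hN_null⟩ := exists_measurable_superset_of_null <| ae_iff.1 <|
    ae_isApproximableByCells hτ_zero hτ_add hτ hτ_erg hV_cont hV_nonneg hV F
  refine ⟨Nᶜ, hN_meas.compl, (prob_compl_eq_one_iff hN_meas).2 hN_null, fun ω hω c a b => ?_⟩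
  have h_cells : IsApproximableByCells E0 (environment τ V ω) F (W0 P τ E0 V F) :=
    not_not.1 fun h => hω (hN h)
  obtain ⟨φ, hφ_mem, hφ_moment, hφ_energy⟩ := exists_recovery_field hs
    (fun z b hb => hV_nonneg b hb (τ z ω)) (fun z b hb => hV_cont b hb (τ z ω)) h_cells a b
  refine ⟨fun ε z => F (ε • toRd z) + c + ε • φ ε z, fun ε _ z hz => ?_,
    hφ_moment.congr' ?_, hφ_energy.congr' ?_⟩
  · beta_reduce
    rw [hφ_mem ε z hz, smul_zero, add_zero]
  · filter_upwards [self_mem_nhdsWithin] with ε hε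
    simp only [add_sub_cancel_left, tsum_halfBox_eq_sum hε]
    rfl
  · filter_upwards [self_mem_nhdsWithin] with ε hε
    exact (energyE_halfBox τ E0 V ω F hε a b c (φ ε)).symm

/-- recovery sequence with prescribed affine boundary values,
Step 1 of the proof of Proposition 3.11. -/
theorem recovery_affine_bdry
    {d n : ℕ} (hd : 2 ≤ d) (hn : 1 ≤ n)
    {Ω : Type*} [MeasurableSpace Ω] (P : Measure Ω) [IsProbabilityMeasure P]
    (τ : Zd d → Ω → Ω) (hτ0 : τ 0 = id)
    (hτadd : ∀ x y : Zd d, τ (x + y) = τ x ∘ τ y)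
    (hτmp : ∀ z : Zd d, MeasurePreserving (τ z) P P)
    (hτerg : ∀ B : Set Ω, MeasurableSet B → (∀ z : Zd d, τ z ⁻¹' B = B) → P B = 0 ∨ P B = 1)
    (E0 : Finset (Zd d)) (hE00 : (0 : Zd d) ∉ E0) (hE0b : ∀ i : Fin d, stdb i ∈ E0)
    (p c₁ : ℝ) (hp : 1 < p) (hc₁ : 0 < c₁)
    (V : Zd d → Ω → Rn n → ℝ)
    (hVmeas : ∀ b ∈ E0, Measurable fun q : Ω × Rn n => V b q.1 q.2)
    (hVcont : ∀ b ∈ E0, ∀ ω : Ω, Continuous (V b ω))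
    (hVnn : ∀ b ∈ E0, ∀ (ω : Ω) (r : Rn n), 0 ≤ V b ω r)
    (lam : Zd d → Ω → ℝ)
    (hlammeas : ∀ b ∈ E0, Measurable (lam b))
    (hlamnn : ∀ b ∈ E0, ∀ ω : Ω, 0 ≤ lam b ω)
    (hgrowth : ∀ b ∈ E0, ∀ (ω : Ω) (r : Rn n),
      lam b ω * (‖r‖ ^ p / c₁ - c₁) ≤ V b ω r ∧ V b ω r ≤ c₁ * (1 + lam b ω * (‖r‖ ^ p + 1)))
    (α β : ℝ) (hα : 1 ≤ α) (hβ : 1 / (p - 1) ≤ β)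
    (hmomα : ∀ b ∈ E0, ∫⁻ ω, ENNReal.ofReal (lam b ω ^ α) ∂P < ⊤)
    (hmomβ : ∀ i : Fin d, ∫⁻ ω, ENNReal.ofReal (lam (stdb i) ω) ^ (-β) ∂P < ⊤)
    (h2T : (1 < α ∧ 1 / α + 1 / β ≤ p / (d : ℝ)) ∨
      (n = 1 ∧ ∃ q c₂ : ℝ, 1 < q ∧ q < p ∧ ∃ f : Zd d → Ω → Rn n → ℝ,
        ∀ b ∈ E0, ∀ ω : Ω,
          (∀ r : Rn n, 0 ≤ f b ω r) ∧
          ConvexOn ℝ Set.univ (fun r : Rn n => V b ω r + f b ω r) ∧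
          (∀ r : Rn n, f b ω r ≤ c₂ * (1 + lam b ω * (‖r‖ ^ q + 1)))))
    (F : Rd d →L[ℝ] Rn n) :
    ∃ Ω' : Set Ω, MeasurableSet Ω' ∧ P Ω' = 1 ∧
      ∀ ω ∈ Ω', ∀ c : Rn n, ∀ a b : Fin d → ℝ,
        ∃ u : ℝ → Zd d → Rn n,
          (∀ ε : ℝ, 0 < ε → ∀ z : Zd d,
            infDist (ε • toRd z) (halfBox a b)ᶜ ≤ ε * irange d E0 →
              u ε z = F (ε • toRd z) + c) ∧
          Tendsto (fun ε : ℝ => ε ^ d * ∑' z : Zd d,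
              if ε • toRd z ∈ halfBox a b then
                ‖u ε z - (F (ε • toRd z) + c)‖ ^ (p * β / (β + 1)) else 0)
            (𝓝[>] (0 : ℝ)) (𝓝 0) ∧
          Tendsto (fun ε : ℝ => energyE τ E0 V ε ω (u ε) (halfBox a b))
            (𝓝[>] (0 : ℝ)) (𝓝 ((volume (halfBox a b)).toReal * W0 P τ E0 V F)) := by
  have hV (b) (hb : b ∈ E0) (r : Rn n) : Integrable (fun ω => V b ω r) P :=
    integrable_of_le_mul_one_add ((hVmeas b hb).comp measurable_prodMk_right)
      (hVnn b hb · r) (integrable_of_lintegral_rpow_lt_top (hlammeas b hb) (hlamnn b hb) hα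
        (hmomα b hb)) fun ω => (hgrowth b hb ω r).2
  have hβ_pos : 0 < β := (one_div_pos.2 (sub_pos.2 hp)).trans_le hβ
  exact recovery_affine_bdry_general P τ hτ0 hτadd hτmp hτerg E0 V hVcont hVnn hV
    (by positivity) F

end StochHom
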